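/- There exists a flow (t,E) ↦ E(t) on Lebesgue measurable subsets of ℝ of finite measure satisfying properties (1)–(7) of the one-dimensional symmetrization flow (in particular |E(0) Δ E| = 0, |E(1) Δ E⋆| = 0, |E(t)| = |E|, contractivity |E₁(t) Δ E₂(t)| ≤ |E₁ Δ E₂|, and monotonicity of t ↦ T(E₁(t),E₂(t),E₃(t))) such that, in addition, for every measurable set E ⊂ ℝ of finite measure and every t > 0, the set E(t) coincides, up to a Lebesgue null set, with a countable union of intervals. -/

import Mathlib

/-!
The flow is `E(t) = Fl (1 - t) E`, where `Fl 1` is the identity and, for `lam < 1`, `Fl lam` is the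
sliding map `slide lam`. On a finite union of disjoint intervals the sliding map is the motion in
which every centre contracts rigidly, `c ↦ lam * c`, until two intervals touch; intervals that touch
stick together and move on as one interval with its own centre.

The point is to define this motion for all sets at once, by describing the complement of the image.
A point `p` is a gap at parameter `lam` if there is a cut `x ∈ [-∞, ∞]` such that all mass of `E` to
the right of `x` ends to the right of `p`, and all mass to the left of `x` ends to the left of `p`.
When a set `S` is rescaled by `lam` and packed without overlap, its centre of mass is multiplied by
`lam` while its measure is kept, so the first requirement reads `|S|² / 2 ≤ lam ∫_S y dy - p |S|` for
all bounded measurable `S ⊆ E` to the right of `x`. These conditions become stronger as `E` grows, so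
`slide lam` is monotone; they are closed in `(p, x)` and `x` ranges over a compact space, so
`slide lam E` is open, hence a countable union of compact intervals. This is the smoothing property.
The sliding map also commutes with increasing unions (`slide_iUnion`).

For a finite union of intervals the conditions reduce to finitely many inequalities on subfamilies
(`gapSet_cfg`): the defect in the moment inequality is concave in the mass taken from each interval,
so only full or empty intervals matter (`box_min`), and a cut cannot split an interval (`no_split`).
This gives the description by collisions (`FinU.collision`), and induction on the number of intervals
gives measure preservation, the semigroup law and Lipschitz continuity in `lam` (`goodFlow`).

For a general set, `volume (slide lam E) ≤ volume E` follows by outer regularity from open sets, which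
are increasing unions of finite dyadic unions. For the converse, the part of `E` in a small cell where
`E` is dense cannot be split by a cut, so that the gaps of `E` are gaps of a finite system of intervals
which carries almost all the mass of `E` (`gapSet_subset_gapD`, `le_volReal_slide`). Monotonicity
together with measure preservation yields contractivity, and continuity and the semigroup law pass to
all sets by approximation. At `lam = 0` every `p` with `|p| > |E| / 2` is a gap, so the image is `E⋆`.

For three intervals, `T1` is the integral of an even function, decreasing in `|u|`, over a window
centred at the sum of the three centres (`T1_piece`), so contracting all centres does not decrease it
(`window_anti`, `T1_cfg_anti`). Induction on the total number of intervals, restarting at each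
collision, gives monotonicity for finite unions; Lipschitz dependence of `T1` on its arguments (`T1_le`)
and contractivity give the general case.
-/

open MeasureTheory Set Filter

noncomputable section

/-- Indicator function of a set of reals, with value `1 : ℝ`. -/
def ind1 (E : Set ℝ) : ℝ → ℝ := E.indicator 1

/-- The trilinear form `T(E₁,E₂,E₃) = ∫∫ 1_{E₁}(x) 1_{E₂}(y) 1_{E₃}(−x−y) dx dy`. -/
def T1 (A B C : Set ℝ) : ℝ :=
  ∫ p : ℝ × ℝ, ind1 A p.1 * ind1 B p.2 * ind1 C (-p.1 - p.2)

/-- `E⋆`: the closed interval centered at the origin with the same measure as `E`. -/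
def intervalStar (E : Set ℝ) : Set ℝ :=
  Set.Icc (-(volume E).toReal / 2) ((volume E).toReal / 2)

/-! ### Gaps and the sliding map -/

/-- Right condition for a gap `p` with cut `x`: every bounded measurable part `S` of `E` to the right
of `x` stays to the right of `p` when rescaled by `lam` and packed without overlap. A set of measure
`|S|` to the right of `p` has moment about `p` at least `|S|² / 2`, whence the inequality. -/
def RC (lam p : ℝ) (x : EReal) (E : Set ℝ) : Prop :=
  ∀ S ⊆ E, MeasurableSet S → Bornology.IsBounded S → (∀ y ∈ S, x < (y : EReal)) →
    (volume.real S) ^ 2 / 2 ≤ lam * (∫ y in S, y) - p * volume.real S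

/-- Left condition for a gap: the mirror image of `RC`; see `LC_iff` for the explicit form. -/
def LC (lam p : ℝ) (x : EReal) (E : Set ℝ) : Prop := RC lam (-p) (-x) (Set.preimage Neg.neg E)

/-- The points not covered by the image of `E` under the sliding map with parameter `lam`. The cut
`x` may be infinite, for a gap which has all of `E` on one side. -/
def gapSet (lam : ℝ) (E : Set ℝ) : Set ℝ := {p | ∃ x : EReal, RC lam p x E ∧ LC lam p x E}

/-- The sliding map: the image of `E` when positions are contracted by the factor `lam` and mass
which collides sticks together. -/
def slide (lam : ℝ) (E : Set ℝ) : Set ℝ := (gapSet lam E)ᶜ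

lemma bounded_measure_ne_top {S : Set ℝ} (hb : Bornology.IsBounded S) : volume S ≠ ⊤ :=
  hb.measure_lt_top.ne

lemma integrableOn_id_of_bounded {S : Set ℝ} (hb : Bornology.IsBounded S) :
    IntegrableOn (fun y : ℝ => y) S := by
  obtain ⟨r, hr⟩ := hb.subset_closedBall 0
  exact (continuous_id.continuousOn.integrableOn_compact (isCompact_closedBall (0:ℝ) r)).mono_set hr

lemma setIntegral_neg_preimage (S : Set ℝ) :
    ∫ y in Neg.neg ⁻¹' S, y = - ∫ y in S, y := by
  have := (Measure.measurePreserving_neg (volume : Measure ℝ)).setIntegral_preimage_emb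
    (Homeomorph.neg ℝ).measurableEmbedding (fun y : ℝ => -y) S
  simp only [neg_neg] at this
  rw [integral_neg] at this
  exact this

lemma volume_neg_preimage (S : Set ℝ) : volume (Neg.neg ⁻¹' S) = volume S :=
  (Measure.measurePreserving_neg (volume : Measure ℝ)).measure_preimage_emb
    (Homeomorph.neg ℝ).measurableEmbedding S

lemma bounded_neg_preimage {S : Set ℝ} (hb : Bornology.IsBounded S) :
    Bornology.IsBounded (Neg.neg ⁻¹' S) := by
  have : Neg.neg ⁻¹' S = -S := rfl
  rw [this]; exact hb.neg

lemma LC_iff {lam p : ℝ} {x : EReal} {E : Set ℝ} : LC lam p x E ↔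
    ∀ S ⊆ E, MeasurableSet S → Bornology.IsBounded S → (∀ y ∈ S, (y : EReal) < x) →
    (volume.real S) ^ 2 / 2 ≤ p * volume.real S - lam * (∫ y in S, y) := by
  constructor
  · intro h S hS hm hb hx
    have := h (Neg.neg ⁻¹' S) (preimage_mono hS) (measurable_neg hm) (bounded_neg_preimage hb) (by
      intro y hy
      have := hx (-y) hy
      rw [EReal.coe_neg] at this
      exact EReal.neg_lt_comm.mp this)
    rw [setIntegral_neg_preimage, Measure.real, volume_neg_preimage, ← Measure.real] at this
    linarith
  · intro h S hS hm hb hx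
    have := h (Neg.neg ⁻¹' S) (fun y hy => by simpa using hS hy) (measurable_neg hm)
      (bounded_neg_preimage hb) (by
      intro y hy
      have := hx (-y) hy
      rw [EReal.coe_neg] at this
      simpa using EReal.lt_neg_comm.mp this)
    rw [setIntegral_neg_preimage, Measure.real, volume_neg_preimage, ← Measure.real] at this
    linarith

/-- Among sets of given measure in `[a, ∞)`, the interval starting at `a` has the least moment. -/
lemma bathtub {S : Set ℝ} (hm : MeasurableSet S) (hb : Bornology.IsBounded S) {a : ℝ}
    (ha : ∀ y ∈ S, a ≤ y) :
    a * volume.real S + (volume.real S) ^ 2 / 2 ≤ ∫ y in S, y := by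
  set m := volume.real S with hmdef
  have hm0 : 0 ≤ m := measureReal_nonneg
  have hfin : volume S ≠ ⊤ := bounded_measure_ne_top hb
  have hIntg : IntegrableOn (fun y : ℝ => a + m - y) S :=
    (integrableOn_const hfin).sub (integrableOn_id_of_bounded hb)
  have h1 : ∫ y in S, (a + m - y) ≤ ∫ y in Icc a (a + m), (a + m - y) := by
    have e1 : ∫ y in S, (a + m - y) ≤ ∫ y in S, max (a + m - y) 0 := by
      apply integral_mono hIntg (hIntg.sup (integrableOn_zero))
      intro y; exact le_max_left _ _
    have e2 : ∫ y in S, max (a + m - y) 0 = ∫ y in S ∩ Icc a (a + m), max (a + m - y) 0 := by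
      apply setIntegral_eq_of_subset_of_forall_sdiff_eq_zero hm inter_subset_left
      intro y hy
      have h1 := ha y hy.1
      have h2 : ¬ (y ≤ a + m) := fun h => hy.2 ⟨hy.1, h1, h⟩
      exact max_eq_right (by linarith)
    have e3 : ∫ y in S ∩ Icc a (a + m), max (a + m - y) 0
        ≤ ∫ y in Icc a (a + m), max (a + m - y) 0 := by
      apply setIntegral_mono_set
      · exact (Continuous.continuousOn (by fun_prop)).integrableOn_compact isCompact_Icc
      · exact Eventually.of_forall (fun y => le_max_right _ _)
      · exact (inter_subset_right).eventuallyLE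
    have e4 : ∫ y in Icc a (a + m), max (a + m - y) 0 = ∫ y in Icc a (a + m), (a + m - y) := by
      apply setIntegral_congr_fun measurableSet_Icc
      intro y hy
      exact max_eq_left (by linarith [hy.2])
    linarith
  have h2 : ∫ y in Icc a (a + m), (a + m - y) = m ^ 2 / 2 := by
    rw [integral_Icc_eq_integral_Ioc, ← intervalIntegral.integral_of_le (by linarith)]
    rw [intervalIntegral.integral_sub (by simp) (by simp)]
    simp only [intervalIntegral.integral_const, integral_id, smul_eq_mul]
    ring
  have h3 : ∫ y in S, (a + m - y) = (a + m) * m - ∫ y in S, y := by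
    have := integral_sub (μ := volume.restrict S) (f := fun _ => a + m) (g := fun y => y)
      (integrableOn_const hfin) (integrableOn_id_of_bounded hb)
    rw [this]
    simp [← hmdef]; ring
  nlinarith

lemma bathtub_upper {S : Set ℝ} (hm : MeasurableSet S) (hb : Bornology.IsBounded S) {b : ℝ}
    (ha : ∀ y ∈ S, y ≤ b) :
    ∫ y in S, y ≤ b * volume.real S - (volume.real S) ^ 2 / 2 := by
  have := bathtub (measurable_neg hm) (bounded_neg_preimage hb) (a := -b) (by
    intro y hy; linarith [ha _ hy])
  rw [setIntegral_neg_preimage, Measure.real, volume_neg_preimage, ← Measure.real] at this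
  linarith

lemma RC.mono {lam p : ℝ} {x : EReal} {E F : Set ℝ} (h : RC lam p x F) (hEF : E ⊆ F) :
    RC lam p x E := fun S hS => h S (hS.trans hEF)

lemma RC.mono_ae {lam p : ℝ} {x : EReal} {E F : Set ℝ} (h : RC lam p x F)
    (hEF : volume (E \ F) = 0) : RC lam p x E := by
  intro S hS hm hb hx
  -- remove from `S` a measurable null hull of `E \ F`
  set N := toMeasurable volume (E \ F)
  have hN : volume N = 0 := by rw [measure_toMeasurable]; exact hEF
  have hsub : S \ N ⊆ F := by
    intro y hy
    by_contra hF
    exact hy.2 (subset_toMeasurable _ _ ⟨hS hy.1, hF⟩)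
  have := h (S \ N) hsub (hm.diff (measurableSet_toMeasurable _ _)) (hb.subset sdiff_subset)
    (fun y hy => hx y hy.1)
  have hae : (S \ N : Set ℝ) =ᵐ[volume] S := sdiff_null_ae_eq_self hN
  rwa [measureReal_congr hae, setIntegral_congr_set hae] at this

lemma gapSet_anti_ae {lam : ℝ} {E F : Set ℝ} (hEF : volume (E \ F) = 0) :
    gapSet lam F ⊆ gapSet lam E := by
  rintro p ⟨x, h1, h2⟩
  refine ⟨x, h1.mono_ae hEF, RC.mono_ae h2 ?_⟩
  rw [← preimage_sdiff, volume_neg_preimage]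
  exact hEF

lemma slide_mono_ae {lam : ℝ} {E F : Set ℝ} (hEF : volume (E \ F) = 0) :
    slide lam E ⊆ slide lam F := compl_subset_compl.mpr (gapSet_anti_ae hEF)

lemma slide_congr_ae {lam : ℝ} {E F : Set ℝ} (hEF : E =ᵐ[volume] F) :
    slide lam E = slide lam F :=
  (slide_mono_ae (ae_le_set.mp hEF.le)).antisymm (slide_mono_ae (ae_le_set.mp hEF.symm.le))

lemma measurableSet_ereal_lt (x : EReal) : MeasurableSet {y : ℝ | x < (y : EReal)} :=
  (isOpen_Ioi.preimage continuous_coe_real_ereal).measurableSet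

/-- Tail integrals depend continuously on the cut point, since points are null sets. -/
lemma continuous_tail {S : Set ℝ} {f : ℝ → ℝ} (hf : IntegrableOn f S) :
    Continuous fun x : EReal => ∫ y in S ∩ {y : ℝ | x < (y : EReal)}, f y := by
  have e : (fun x : EReal => ∫ y in S ∩ {y : ℝ | x < (y : EReal)}, f y) =
      fun x : EReal => ∫ y in S, ({y : ℝ | x < (y : EReal)}).indicator f y := by
    ext x
    rw [setIntegral_indicator (measurableSet_ereal_lt x)]
  rw [e, continuous_iff_continuousAt]
  intro x
  apply continuousAt_of_dominated (bound := fun y => ‖f y‖)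
  · exact Eventually.of_forall fun x => hf.aestronglyMeasurable.indicator (measurableSet_ereal_lt x)
  · exact Eventually.of_forall fun x => Eventually.of_forall fun y => norm_indicator_le_norm_self _ _
  · exact hf.norm
  · have hne : ∀ᵐ y : ℝ ∂(volume.restrict S), (y : EReal) ≠ x := by
      apply ae_restrict_of_ae
      rw [ae_iff]
      apply Set.Subsingleton.measure_zero
      intro a ha b hb
      simp only [ne_eq, not_not, mem_ofPred_eq] at ha hb
      exact EReal.coe_injective (ha.trans hb.symm)
    filter_upwards [hne] with y hy
    rcases lt_or_gt_of_ne hy with h | h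
    · have : ∀ᶠ x' in nhds x, ({y : ℝ | x' < (y : EReal)}).indicator f y = 0 := by
        filter_upwards [lt_mem_nhds h] with x' hx'
        simp [hx'.le]
      exact (continuousAt_const.congr (this.mono fun _ h => h.symm))
    · have : ∀ᶠ x' in nhds x, ({y : ℝ | x' < (y : EReal)}).indicator f y = f y := by
        filter_upwards [gt_mem_nhds h] with x' hx'
        simp [hx']
      exact (continuousAt_const.congr (this.mono fun _ h => h.symm))

lemma RC_iff_tail {lam p : ℝ} {x : EReal} {E : Set ℝ} : RC lam p x E ↔
    ∀ S ⊆ E, MeasurableSet S → Bornology.IsBounded S →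
    (∫ _ in S ∩ {y : ℝ | x < (y : EReal)}, (1:ℝ)) ^ 2 / 2 ≤
      lam * (∫ y in S ∩ {y : ℝ | x < (y : EReal)}, y)
        - p * (∫ _ in S ∩ {y : ℝ | x < (y : EReal)}, (1:ℝ)) := by
  constructor
  · intro h S hS hm hb
    have := h (S ∩ {y : ℝ | x < (y : EReal)}) (inter_subset_left.trans hS)
      (hm.inter (measurableSet_ereal_lt x)) (hb.subset inter_subset_left) (fun y hy => hy.2)
    simpa using this
  · intro h S hS hm hb hx
    have := h S hS hm hb
    have e : S ∩ {y : ℝ | x < (y : EReal)} = S := inter_eq_left.mpr hx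
    rw [e] at this
    simpa using this

lemma isClosed_RC (lam : ℝ) (E : Set ℝ) :
    IsClosed {q : ℝ × EReal | RC lam q.1 q.2 E} := by
  have : {q : ℝ × EReal | RC lam q.1 q.2 E} = ⋂ S ∈ {S : Set ℝ | S ⊆ E ∧ MeasurableSet S ∧
      Bornology.IsBounded S}, {q : ℝ × EReal |
      (∫ y in S ∩ {y : ℝ | q.2 < (y : EReal)}, (1:ℝ)) ^ 2 / 2 ≤
      lam * (∫ y in S ∩ {y : ℝ | q.2 < (y : EReal)}, y)
        - q.1 * (∫ y in S ∩ {y : ℝ | q.2 < (y : EReal)}, (1:ℝ))} := by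
    ext q
    simp only [mem_ofPred_eq, RC_iff_tail, mem_iInter, and_imp]
  rw [this]
  apply isClosed_biInter
  rintro S ⟨hS, hm, hb⟩
  have c0 : Continuous fun q : ℝ × EReal => ∫ y in S ∩ {y : ℝ | q.2 < (y : EReal)}, (1:ℝ) :=
    (continuous_tail (integrableOn_const (bounded_measure_ne_top hb))).comp continuous_snd
  have c1 : Continuous fun q : ℝ × EReal => ∫ y in S ∩ {y : ℝ | q.2 < (y : EReal)}, y :=
    (continuous_tail (integrableOn_id_of_bounded hb)).comp continuous_snd
  exact isClosed_le (by fun_prop) (by fun_prop)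

lemma isClosed_RL (lam : ℝ) (E : Set ℝ) :
    IsClosed {q : ℝ × EReal | RC lam q.1 q.2 E ∧ LC lam q.1 q.2 E} := by
  refine (isClosed_RC lam E).inter ?_
  exact (isClosed_RC lam (Neg.neg ⁻¹' E)).preimage
    (f := fun q : ℝ × EReal => (-q.1, -q.2))
    ((continuous_fst.neg).prodMk continuous_snd.neg)

/-- The gaps form the projection of a closed set along the compact space `EReal`. -/
lemma isOpen_slide (lam : ℝ) (E : Set ℝ) : IsOpen (slide lam E) := by
  rw [slide, isOpen_compl_iff]
  have : gapSet lam E = Prod.fst '' {q : ℝ × EReal | RC lam q.1 q.2 E ∧ LC lam q.1 q.2 E} := by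
    ext p; simp [gapSet]
  rw [this]
  exact isClosedMap_fst_of_compactSpace _ (isClosed_RL lam E)

lemma RC_iUnion {lam p : ℝ} {x : EReal} {E : ℕ → Set ℝ} (hE : Monotone E)
    (hmE : ∀ n, MeasurableSet (E n)) (h : ∀ n, RC lam p x (E n)) : RC lam p x (⋃ n, E n) := by
  intro S hS hm hb hx
  have hU : (⋃ n, S ∩ E n) = S := by
    rw [← inter_iUnion]; exact inter_eq_left.mpr hS
  have hmono : Monotone fun n => S ∩ E n := fun a b hab => inter_subset_inter_right _ (hE hab)
  have h0 : ∀ f : ℝ → ℝ, IntegrableOn f S → Tendsto (fun n => ∫ y in S ∩ E n, f y) atTop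
      (nhds (∫ y in S, f y)) := by
    intro f hf
    have := tendsto_setIntegral_of_monotone (μ := volume) (f := f)
      (fun n => hm.inter (hmE n)) hmono (by rwa [hU])
    rwa [hU] at this
  have t0 : Tendsto (fun n => volume.real (S ∩ E n)) atTop (nhds (volume.real S)) := by
    have := h0 (fun _ => 1) (integrableOn_const (bounded_measure_ne_top hb))
    simpa using this
  have t1 := h0 (fun y => y) (integrableOn_id_of_bounded hb)
  refine le_of_tendsto_of_tendsto' ((t0.pow 2).div_const 2) ((t1.const_mul lam).sub (t0.const_mul p)) ?_
  intro n
  exact h n _ inter_subset_right (hm.inter (hmE n)) (hb.subset inter_subset_left)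
    (fun y hy => hx y hy.1)

/-- The sliding map commutes with increasing unions: for a common gap `p` of the sets `E n`,
the admissible cuts form a decreasing sequence of nonempty closed subsets of the compact space `EReal`,
and a common point of these serves for the union. -/
lemma slide_iUnion (lam : ℝ) {E : ℕ → Set ℝ} (hE : Monotone E) (hmE : ∀ n, MeasurableSet (E n)) :
    slide lam (⋃ n, E n) = ⋃ n, slide lam (E n) := by
  apply Subset.antisymm
  · rw [← compl_subset_compl, slide, compl_compl, compl_iUnion]
    intro p hp
    simp only [slide, compl_compl, mem_iInter] at hp
    let X : ℕ → Set EReal := fun n => {x | RC lam p x (E n) ∧ LC lam p x (E n)}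
    have hcl : ∀ n, IsClosed (X n) := fun n => (isClosed_RL lam (E n)).preimage
      (f := fun x : EReal => (p, x)) (by fun_prop)
    have hne : (⋂ n, X n).Nonempty := by
      apply IsCompact.nonempty_iInter_of_sequence_nonempty_isCompact_isClosed X
      · rintro n x ⟨h1, h2⟩
        exact ⟨h1.mono (hE n.le_succ), RC.mono h2 (preimage_mono (hE n.le_succ))⟩
      · exact hp
      · exact (hcl 0).isCompact
      · exact hcl
    obtain ⟨x, hx⟩ := hne
    simp only [mem_iInter] at hx
    refine ⟨x, RC_iUnion hE hmE (fun n => (hx n).1), ?_⟩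
    rw [LC, preimage_iUnion]
    exact RC_iUnion (fun a b hab => preimage_mono (hE hab)) (fun n => measurable_neg (hmE n))
      (fun n => (hx n).2)
  · exact iUnion_subset fun n => slide_mono_ae (by
      rw [sdiff_eq_empty.mpr (subset_iUnion E n)]; exact measure_empty)

/-! ### Finite systems of intervals -/

/-- The open interval with centre `c j` and length `l j`. -/
def piece (c l : ℤ → ℝ) (j : ℤ) : Set ℝ := Ioo (c j - l j / 2) (c j + l j / 2)

/-- The union of the intervals `piece c l j` for `j ∈ s`. -/
def cfg (s : Finset ℤ) (c l : ℤ → ℝ) : Set ℝ := ⋃ j ∈ s, piece c l j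

/-- The intervals indexed by `s` have positive length and do not overlap; adjacent intervals may
share an endpoint. -/
structure Valid (s : Finset ℤ) (c l : ℤ → ℝ) : Prop where
  pos : ∀ j ∈ s, 0 < l j
  sep : ∀ i ∈ s, ∀ j ∈ s, i ≠ j → (l i + l j) / 2 ≤ |c i - c j|

/-- Discrete form of `RC`: every subfamily of the intervals with centres `C j` and lengths `l j`,
`j ∈ R`, satisfies the moment inequality about `p`. -/
def DR (C l : ℤ → ℝ) (p : ℝ) (R : Finset ℤ) : Prop :=
  ∀ J ⊆ R, (∑ j ∈ J, l j) ^ 2 / 2 ≤ ∑ j ∈ J, (C j - p) * l j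

/-- Gaps of a finite system of possibly overlapping intervals: the index set splits into the
intervals ending to the right of `p` and those ending to the left of `p`. -/
def gapD (s : Finset ℤ) (C l : ℤ → ℝ) : Set ℝ :=
  {p | ∃ R ⊆ s, DR C l p R ∧ DR (fun j => -C j) l (-p) (s \ R)}

/-- The difference of the two sides is concave in each `σ j`, because `lam ≤ 1`, so the inequality on
the box `0 ≤ σ j ≤ l j` follows from the one at its vertices, which correspond to the subfamilies `J`.
The constants `β` and `γ` carry the contribution of coordinates already fixed at a vertex. -/
lemma box_min {lam : ℝ} (hlam : lam ≤ 1) (α l σ : ℤ → ℝ) (R : Finset ℤ) :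
    ∀ β γ : ℝ, (∀ J ⊆ R, (∑ j ∈ J, l j + γ) ^ 2 / 2 ≤
      ∑ j ∈ J, (α j * l j + lam * l j ^ 2 / 2) + β) →
    (∀ j ∈ R, 0 ≤ σ j ∧ σ j ≤ l j) →
    (∑ j ∈ R, σ j + γ) ^ 2 / 2 ≤ ∑ j ∈ R, (α j * σ j + lam * σ j ^ 2 / 2) + β := by
  induction R using Finset.induction_on with
  | empty => intro β γ h _; exact h ∅ (Finset.Subset.refl _)
  | insert i R hi ih =>
    intro β γ h hσ
    have h0 := ih β γ (fun J hJ => h J (hJ.trans (Finset.subset_insert _ _)))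
      (fun j hj => hσ j (Finset.mem_insert_of_mem hj))
    have h1 := ih (β + (α i * l i + lam * l i ^ 2 / 2)) (γ + l i) (fun J hJ => by
      have := h (insert i J) (Finset.insert_subset_insert _ hJ)
      rw [Finset.sum_insert (fun hh => hi (hJ hh)), Finset.sum_insert (fun hh => hi (hJ hh))] at this
      have e : (∑ j ∈ J, l j + (γ + l i)) = (l i + ∑ j ∈ J, l j + γ) := by ring
      rw [e]; linarith) (fun j hj => hσ j (Finset.mem_insert_of_mem hj))
    rw [Finset.sum_insert hi, Finset.sum_insert hi]
    obtain ⟨s0, s1⟩ := hσ i (Finset.mem_insert_self _ _)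
    set A := ∑ j ∈ R, σ j
    set B := ∑ j ∈ R, (α j * σ j + lam * σ j ^ 2 / 2)
    rcases (s0.trans s1).eq_or_lt with hl | hl
    · have : σ i = 0 := by linarith
      rw [this]
      have e : (0 + A + γ) = A + γ := by ring
      rw [e]; nlinarith
    · -- the defect is concave in `σ i`, so it dominates the chord between `0` and `l i`
      have key : l i * (B + β + α i * σ i + lam * σ i ^ 2 / 2 - (A + σ i + γ) ^ 2 / 2) =
          (l i - σ i) * (B + β - (A + γ) ^ 2 / 2) +
          σ i * (B + (β + (α i * l i + lam * l i ^ 2 / 2)) - (A + (γ + l i)) ^ 2 / 2)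
          + (1 - lam) / 2 * (σ i * (l i - σ i) * l i) := by ring
      have p1 : 0 ≤ (l i - σ i) * (B + β - (A + γ) ^ 2 / 2) :=
        mul_nonneg (by linarith) (by linarith)
      have p2 : 0 ≤ σ i * (B + (β + (α i * l i + lam * l i ^ 2 / 2)) - (A + (γ + l i)) ^ 2 / 2) :=
        mul_nonneg s0 (by linarith)
      have p3 : 0 ≤ (1 - lam) / 2 * (σ i * (l i - σ i) * l i) :=
        mul_nonneg (by linarith) (mul_nonneg (mul_nonneg s0 (by linarith)) hl.le)
      have := nonneg_of_mul_nonneg_right (by rw [key]; linarith :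
        0 ≤ l i * (B + β + α i * σ i + lam * σ i ^ 2 / 2 - (A + σ i + γ) ^ 2 / 2)) hl
      have e : (σ i + A + γ) = A + σ i + γ := by ring
      rw [e]; linarith

lemma measurableSet_piece (c l : ℤ → ℝ) (j : ℤ) : MeasurableSet (piece c l j) := measurableSet_Ioo

lemma bounded_piece (c l : ℤ → ℝ) (j : ℤ) : Bornology.IsBounded (piece c l j) :=
  Metric.isBounded_Ioo _ _

lemma measurableSet_cfg (s : Finset ℤ) (c l : ℤ → ℝ) : MeasurableSet (cfg s c l) :=
  Finset.measurableSet_biUnion _ fun j _ => measurableSet_piece c l j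

lemma bounded_cfg (s : Finset ℤ) (c l : ℤ → ℝ) : Bornology.IsBounded (cfg s c l) :=
  (Bornology.isBounded_biUnion_finset s).mpr fun j _ => bounded_piece c l j

lemma volReal_piece {c l : ℤ → ℝ} {j : ℤ} (h : 0 ≤ l j) : volume.real (piece c l j) = l j := by
  rw [piece, Real.volume_real_Ioo_of_le (by linarith)]; ring

lemma integral_piece {c l : ℤ → ℝ} {j : ℤ} (h : 0 ≤ l j) :
    ∫ y in piece c l j, y = c j * l j := by
  rw [piece, ← integral_Ioc_eq_integral_Ioo, ← intervalIntegral.integral_of_le (by linarith),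
    integral_id]
  ring

lemma Valid.disj {s : Finset ℤ} {c l : ℤ → ℝ} (h : Valid s c l) :
    (s : Set ℤ).PairwiseDisjoint (piece c l) := by
  intro i hi j hj hij
  have := h.sep i hi j hj hij
  rw [Function.onFun, Set.disjoint_left]
  rintro y ⟨h1, h2⟩ ⟨h3, h4⟩
  rcases abs_cases (c i - c j) with ⟨h5, _⟩ | ⟨h5, _⟩ <;> rw [h5] at this <;> linarith

lemma Valid.subset {s t : Finset ℤ} {c l : ℤ → ℝ} (h : Valid s c l) (ht : t ⊆ s) : Valid t c l :=
  ⟨fun j hj => h.pos j (ht hj), fun i hi j hj => h.sep i (ht hi) j (ht hj)⟩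

lemma Valid.neg {s : Finset ℤ} {c l : ℤ → ℝ} (h : Valid s c l) : Valid s (fun j => -c j) l :=
  ⟨h.pos, fun i hi j hj hij => by
    have := h.sep i hi j hj hij
    rwa [show -c i - -c j = -(c i - c j) by ring, abs_neg]⟩

lemma Valid.volReal {s : Finset ℤ} {c l : ℤ → ℝ} (h : Valid s c l) :
    volume.real (cfg s c l) = ∑ j ∈ s, l j := by
  rw [cfg, measureReal_biUnion_finset h.disj (fun j _ => measurableSet_piece c l j)
    (fun j _ => bounded_measure_ne_top (bounded_piece c l j))]
  exact Finset.sum_congr rfl fun j hj => volReal_piece (h.pos j hj).le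

lemma Valid.integral {s : Finset ℤ} {c l : ℤ → ℝ} (h : Valid s c l) :
    ∫ y in cfg s c l, y = ∑ j ∈ s, c j * l j := by
  rw [cfg, integral_biUnion_finset s (fun j _ => measurableSet_piece c l j) h.disj
    (fun j _ => integrableOn_id_of_bounded (bounded_piece c l j))]
  exact Finset.sum_congr rfl fun j hj => integral_piece (h.pos j hj).le

lemma cfg_neg (s : Finset ℤ) (c l : ℤ → ℝ) :
    Neg.neg ⁻¹' (cfg s c l) = cfg s (fun j => -c j) l := by
  ext y
  simp only [cfg, piece, mem_preimage, mem_iUnion, mem_Ioo, exists_prop]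
  constructor <;> rintro ⟨j, hj, h1, h2⟩ <;> exact ⟨j, hj, by linarith, by linarith⟩

/-- Intervals lying to the right of `p` satisfy the discrete moment inequality. -/
lemma Valid.DR_right {s : Finset ℤ} {C l : ℤ → ℝ} (h : Valid s C l) {p : ℝ}
    (hp : ∀ j ∈ s, p ≤ C j - l j / 2) : DR C l p s := by
  intro J hJ
  have hv := h.subset hJ
  have := bathtub (measurableSet_cfg J C l) (bounded_cfg J C l) (a := p) (by
    intro y hy
    simp only [cfg, piece, mem_iUnion, mem_Ioo, exists_prop] at hy
    obtain ⟨j, hj, h1, h2⟩ := hy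
    linarith [hp j (hJ hj)])
  rw [hv.volReal, hv.integral] at this
  have e : ∑ j ∈ J, (C j - p) * l j = ∑ j ∈ J, C j * l j - p * ∑ j ∈ J, l j := by
    rw [Finset.mul_sum, ← Finset.sum_sub_distrib]
    exact Finset.sum_congr rfl fun j _ => by ring
  rw [e]; linarith

lemma DR.single {C l : ℤ → ℝ} {p : ℝ} {R : Finset ℤ} (h : DR C l p R) {j : ℤ} (hj : j ∈ R)
    (hl : 0 < l j) : p ≤ C j - l j / 2 := by
  have := h {j} (Finset.singleton_subset_iff.mpr hj)
  simp only [Finset.sum_singleton] at this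
  have h2 : 0 ≤ (C j - l j / 2 - p) * l j := by nlinarith
  linarith [nonneg_of_mul_nonneg_left h2 hl]

/-- While the intervals do not overlap, the discrete gaps are exactly the uncovered points. -/
lemma gapD_of_valid {s : Finset ℤ} {C l : ℤ → ℝ} (h : Valid s C l) :
    gapD s C l = (cfg s C l)ᶜ := by
  classical
  ext p
  simp only [gapD, mem_ofPred_eq, mem_compl_iff, cfg, piece, mem_iUnion, mem_Ioo, exists_prop,
    not_exists, not_and, not_lt]
  constructor
  · rintro ⟨R, hR, h1, h2⟩ j hj hlt
    by_cases hjR : j ∈ R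
    · linarith [h1.single hjR (h.pos j hj)]
    · linarith [h2.single (Finset.mem_sdiff.mpr ⟨hj, hjR⟩) (h.pos j hj)]
  · intro hp
    refine ⟨s.filter (fun j => p ≤ C j - l j / 2), Finset.filter_subset _ _, ?_, ?_⟩
    · exact (h.subset (Finset.filter_subset _ _)).DR_right fun j hj => (Finset.mem_filter.mp hj).2
    · apply (h.subset Finset.sdiff_subset).neg.DR_right
      intro j hj
      simp only [Finset.mem_sdiff, Finset.mem_filter, not_and, not_le] at hj
      linarith [hp j hj.1 (hj.2 hj.1)]

/-- The discrete moment inequality controls every measurable subset of the union. -/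
lemma RC_of_DR {lam p : ℝ} (h0 : 0 ≤ lam) (h1 : lam ≤ 1) {R : Finset ℤ} {c l : ℤ → ℝ}
    (hv : Valid R c l) (h : DR (fun j => lam * c j) l p R) {S : Set ℝ} (hm : MeasurableSet S)
    (hS : S ⊆ cfg R c l) :
    (volume.real S) ^ 2 / 2 ≤ lam * (∫ y in S, y) - p * volume.real S := by
  have hU : S = ⋃ j ∈ R, S ∩ piece c l j := by
    rw [← inter_iUnion₂]; exact (inter_eq_left.mpr hS).symm
  have hd : (R : Set ℤ).PairwiseDisjoint fun j => S ∩ piece c l j :=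
    hv.disj.mono fun j => inter_subset_right
  have hb : ∀ j, Bornology.IsBounded (S ∩ piece c l j) := fun j =>
    (bounded_piece c l j).subset inter_subset_right
  have hms : ∀ j, MeasurableSet (S ∩ piece c l j) := fun j => hm.inter (measurableSet_piece c l j)
  set σ : ℤ → ℝ := fun j => volume.real (S ∩ piece c l j) with hσ
  have hvol : volume.real S = ∑ j ∈ R, σ j := by
    conv_lhs => rw [hU]
    exact measureReal_biUnion_finset hd (fun j _ => hms j) (fun j _ => bounded_measure_ne_top (hb j))
  have hIntg : ∫ y in S, y = ∑ j ∈ R, ∫ y in S ∩ piece c l j, y := by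
    conv_lhs => rw [hU]
    exact integral_biUnion_finset R (fun j _ => hms j) hd
      (fun j _ => integrableOn_id_of_bounded (hb j))
  have hlow : ∑ j ∈ R, ((c j - l j / 2) * σ j + σ j ^ 2 / 2) ≤ ∫ y in S, y := by
    rw [hIntg]
    exact Finset.sum_le_sum fun j _ => bathtub (hms j) (hb j) fun y hy => hy.2.1.le
  have hbox := box_min h1 (fun j => lam * (c j - l j / 2) - p) l σ R 0 0 (by
    intro J hJ
    have := h J hJ
    rw [add_zero, add_zero]
    refine this.trans_eq (Finset.sum_congr rfl fun j _ => by ring)) (by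
    intro j hj
    refine ⟨measureReal_nonneg, ?_⟩
    rw [← volReal_piece (c := c) (hv.pos j hj).le]
    exact measureReal_mono inter_subset_right (bounded_measure_ne_top (bounded_piece c l j)))
  rw [add_zero, add_zero] at hbox
  rw [hvol]
  have e : ∑ j ∈ R, ((lam * (c j - l j / 2) - p) * σ j + lam * σ j ^ 2 / 2) =
      lam * ∑ j ∈ R, ((c j - l j / 2) * σ j + σ j ^ 2 / 2) - p * ∑ j ∈ R, σ j := by
    rw [Finset.mul_sum, Finset.mul_sum, ← Finset.sum_sub_distrib]
    exact Finset.sum_congr rfl fun j _ => by ring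
  rw [e] at hbox
  have := mul_le_mul_of_nonneg_left hlow h0
  linarith

/-- A discrete splitting of the intervals comes from a cut of the line, and subfamilies control
arbitrary measurable subsets. -/
lemma gapD_subset_gapSet {lam : ℝ} (h0 : 0 ≤ lam) (h1 : lam ≤ 1) {s : Finset ℤ} {c l : ℤ → ℝ}
    (hv : Valid s c l) : gapD s (fun j => lam * c j) l ⊆ gapSet lam (cfg s c l) := by
  rintro p ⟨R, hR, hr, hl⟩
  -- the two groups are ordered, because their rescaled copies lie on either side of `p`
  have hord : ∀ k ∈ s \ R, ∀ j ∈ R, c k + l k / 2 ≤ c j - l j / 2 := by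
    intro k hk j hj
    have hks := (Finset.mem_sdiff.mp hk).1
    have hne : j ≠ k := fun e => (Finset.mem_sdiff.mp hk).2 (e ▸ hj)
    have a1 := hr.single hj (hv.pos j (hR hj))
    have a2 := hl.single hk (hv.pos k hks)
    have p1 := hv.pos j (hR hj)
    have p2 := hv.pos k hks
    have hs := hv.sep j (hR hj) k hks hne
    have : c k < c j := by
      by_contra hcon
      nlinarith [mul_le_mul_of_nonneg_left (not_lt.mp hcon) h0]
    rw [abs_of_pos (by linarith)] at hs
    linarith
  refine ⟨(s \ R).sup fun j => ((c j + l j / 2 : ℝ) : EReal), ?_, ?_⟩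
  · intro S hS hm hb hx
    refine RC_of_DR h0 h1 (hv.subset hR) hr hm ?_
    intro y hy
    have hyU := hS hy
    simp only [cfg, mem_iUnion, exists_prop] at hyU ⊢
    obtain ⟨j, hj, hyj⟩ := hyU
    refine ⟨j, ?_, hyj⟩
    by_contra hjR
    have := (Finset.le_sup (f := fun j => ((c j + l j / 2 : ℝ) : EReal))
      (Finset.mem_sdiff.mpr ⟨hj, hjR⟩)).trans_lt (hx y hy)
    rw [EReal.coe_lt_coe_iff] at this
    linarith [hyj.2]
  · intro S hS hm hb hx
    rw [cfg_neg] at hS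
    have hl' : DR (fun j => lam * (-c j)) l (-p) (s \ R) := by
      simpa only [mul_neg] using hl
    refine RC_of_DR h0 h1 (hv.subset Finset.sdiff_subset).neg hl' hm ?_
    intro y hy
    have hyU := hS hy
    simp only [cfg, mem_iUnion, exists_prop] at hyU ⊢
    obtain ⟨j, hj, hyj⟩ := hyU
    refine ⟨j, ?_, hyj⟩
    by_contra hjR
    have hjR : j ∈ R := by
      by_contra h'; exact hjR (Finset.mem_sdiff.mpr ⟨hj, h'⟩)
    have h2 : (s \ R).sup (fun j => ((c j + l j / 2 : ℝ) : EReal)) ≤ ((c j - l j / 2 : ℝ) : EReal) :=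
      Finset.sup_le fun k hk => EReal.coe_le_coe_iff.mpr (hord k hk j hjR)
    have h3 := (EReal.neg_lt_comm.mp (hx y hy)).trans_le h2
    rw [← EReal.coe_neg, EReal.coe_lt_coe_iff] at h3
    linarith [hyj.2]

/-- A point cannot split a sufficiently dense cluster. -/
lemma no_split {lam p : ℝ} (h0 : 0 ≤ lam) {x : EReal} {E A : Set ℝ} (hA : A ⊆ E)
    (hm : MeasurableSet A) {a b : ℝ} (hab : A ⊆ Icc a b)
    (hd : lam * (b - a) < (1 + lam) / 2 * volume.real A)
    (hR : RC lam p x E) (hL : LC lam p x E) :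
    volume (A ∩ {y : ℝ | (y : EReal) < x}) = 0 ∨ volume (A ∩ {y : ℝ | x < (y : EReal)}) = 0 := by
  have hmL : MeasurableSet {y : ℝ | (y : EReal) < x} :=
    (isOpen_Iio.preimage continuous_coe_real_ereal).measurableSet
  have hb : Bornology.IsBounded A := (Metric.isBounded_Icc a b).subset hab
  set A1 := A ∩ {y : ℝ | (y : EReal) < x}
  set A2 := A ∩ {y : ℝ | x < (y : EReal)}
  have hm1 : MeasurableSet A1 := hm.inter hmL
  have hm2 : MeasurableSet A2 := hm.inter (measurableSet_ereal_lt x)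
  have hb1 : Bornology.IsBounded A1 := hb.subset inter_subset_left
  have hb2 : Bornology.IsBounded A2 := hb.subset inter_subset_left
  have f1 := bounded_measure_ne_top hb1
  have f2 := bounded_measure_ne_top hb2
  have e1 := LC_iff.mp hL A1 (inter_subset_left.trans hA) hm1 hb1 (fun y hy => hy.2)
  have e2 := hR A2 (inter_subset_left.trans hA) hm2 hb2 (fun y hy => hy.2)
  have g1 := bathtub hm1 hb1 (a := a) (fun y hy => (hab hy.1).1)
  have g2 := bathtub_upper hm2 hb2 (b := b) (fun y hy => (hab hy.1).2)
  have hsum : volume.real A ≤ volume.real A1 + volume.real A2 := by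
    have hae : A ⊆ A1 ∪ A2 ∪ {y : ℝ | (y : EReal) = x} := by
      intro y hy
      rcases lt_trichotomy (y : EReal) x with h | h | h
      · exact Or.inl (Or.inl ⟨hy, h⟩)
      · exact Or.inr h
      · exact Or.inl (Or.inr ⟨hy, h⟩)
    have hz : volume {y : ℝ | (y : EReal) = x} = 0 := by
      apply Set.Subsingleton.measure_zero
      intro a ha b hb
      exact EReal.coe_injective (ha.trans hb.symm)
    have h1 : volume A ≤ volume A1 + volume A2 := by
      calc volume A ≤ volume (A1 ∪ A2 ∪ {y : ℝ | (y : EReal) = x}) := measure_mono hae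
        _ ≤ volume (A1 ∪ A2) + volume {y : ℝ | (y : EReal) = x} := measure_union_le _ _
        _ = volume (A1 ∪ A2) := by rw [hz, add_zero]
        _ ≤ _ := measure_union_le _ _
    rw [Measure.real, Measure.real, Measure.real, ← ENNReal.toReal_add f1 f2]
    exact ENNReal.toReal_mono (ENNReal.add_ne_top.mpr ⟨f1, f2⟩) h1
  by_contra hcon
  push Not at hcon
  have u1 : 0 < volume.real A1 := ENNReal.toReal_pos hcon.1 f1
  have u2 : 0 < volume.real A2 := ENNReal.toReal_pos hcon.2 f2
  set u := volume.real A1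
  set v := volume.real A2
  have k1 : u * (u / 2 + lam * (a + u / 2) - p) ≤ 0 := by
    nlinarith [mul_le_mul_of_nonneg_left g1 h0]
  have k2 : v * (v / 2 - lam * (b - v / 2) + p) ≤ 0 := by
    nlinarith [mul_le_mul_of_nonneg_left g2 h0]
  have k1' := nonpos_of_mul_nonpos_right k1 u1
  have k2' := nonpos_of_mul_nonpos_right k2 u2
  nlinarith [mul_le_mul_of_nonneg_left hsum h0]

/-- Gaps of a set containing dense clusters are gaps of the system of clusters. -/
lemma gapSet_subset_gapD {lam : ℝ} (h0 : 0 ≤ lam) {s : Finset ℤ} {c l a b : ℤ → ℝ}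
    {A : ℤ → Set ℝ} {E : Set ℝ} (hA : ∀ j ∈ s, A j ⊆ E) (hm : ∀ j ∈ s, MeasurableSet (A j))
    (hab : ∀ j ∈ s, A j ⊆ Icc (a j) (b j)) (hdisj : (s : Set ℤ).PairwiseDisjoint A)
    (hl : ∀ j ∈ s, volume.real (A j) = l j) (hc : ∀ j ∈ s, ∫ y in A j, y = c j * l j)
    (hd : ∀ j ∈ s, lam * (b j - a j) < (1 + lam) / 2 * l j) :
    gapSet lam E ⊆ gapD s (fun j => lam * c j) l := by
  classical
  rintro p ⟨x, hR, hL⟩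
  have hmL : MeasurableSet {y : ℝ | (y : EReal) < x} :=
    (isOpen_Iio.preimage continuous_coe_real_ereal).measurableSet
  have hz : volume {y : ℝ | (y : EReal) = x} = 0 := by
    apply Set.Subsingleton.measure_zero
    intro a ha b hb
    exact EReal.coe_injective (ha.trans hb.symm)
  have hsplit : ∀ j ∈ s, volume (A j ∩ {y : ℝ | (y : EReal) < x}) = 0 ∨
      volume (A j ∩ {y : ℝ | x < (y : EReal)}) = 0 := fun j hj =>
    no_split h0 (hA j hj) (hm j hj) (hab j hj) (by rw [hl j hj]; exact hd j hj) hR hL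
  -- the part of a family of clusters inside `H` carries all their mass and moment
  have hfam : ∀ (H : Set ℝ), MeasurableSet H → ∀ J ⊆ s, (∀ j ∈ J, volume (A j \ H) = 0) →
      volume.real (⋃ j ∈ J, A j ∩ H) = ∑ j ∈ J, l j ∧
      ∫ y in ⋃ j ∈ J, A j ∩ H, y = ∑ j ∈ J, c j * l j := by
    intro H hH J hJ hnull
    have hae : ∀ j ∈ J, (A j ∩ H : Set ℝ) =ᵐ[volume] A j := by
      intro j hj
      rw [← sdiff_sdiff_right_self]
      exact sdiff_null_ae_eq_self (hnull j hj)
    have hd' : (J : Set ℤ).PairwiseDisjoint fun j => A j ∩ H :=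
      (hdisj.subset (by exact_mod_cast hJ)).mono fun j => inter_subset_left
    have hb : ∀ j ∈ J, Bornology.IsBounded (A j ∩ H) := fun j hj =>
      (Metric.isBounded_Icc _ _).subset (inter_subset_left.trans (hab j (hJ hj)))
    constructor
    · rw [measureReal_biUnion_finset hd' (fun j hj => (hm j (hJ hj)).inter hH)
        (fun j hj => bounded_measure_ne_top (hb j hj))]
      exact Finset.sum_congr rfl fun j hj => by
        rw [measureReal_congr (hae j hj), hl j (hJ hj)]
    · rw [integral_biUnion_finset J (fun j hj => (hm j (hJ hj)).inter hH) hd'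
        (fun j hj => integrableOn_id_of_bounded (hb j hj))]
      exact Finset.sum_congr rfl fun j hj => by
        rw [setIntegral_congr_set (hae j hj), hc j (hJ hj)]
  have hprops : ∀ (H : Set ℝ), MeasurableSet H → ∀ J ⊆ s,
      (⋃ j ∈ J, A j ∩ H) ⊆ E ∧ MeasurableSet (⋃ j ∈ J, A j ∩ H) ∧
      Bornology.IsBounded (⋃ j ∈ J, A j ∩ H) ∧ ∀ y ∈ (⋃ j ∈ J, A j ∩ H), y ∈ H := by
    intro H hH J hJ
    refine ⟨iUnion₂_subset fun j hj => inter_subset_left.trans (hA j (hJ hj)),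
      Finset.measurableSet_biUnion _ fun j hj => (hm j (hJ hj)).inter hH,
      (Bornology.isBounded_biUnion_finset J).mpr fun j hj =>
        (Metric.isBounded_Icc _ _).subset (inter_subset_left.trans (hab j (hJ hj))), ?_⟩
    intro y hy
    simp only [mem_iUnion, exists_prop] at hy
    obtain ⟨j, _, hy⟩ := hy
    exact hy.2
  refine ⟨s.filter fun j => volume (A j ∩ {y : ℝ | (y : EReal) < x}) = 0,
    Finset.filter_subset _ _, ?_, ?_⟩
  · intro J hJ
    have hJs : J ⊆ s := hJ.trans (Finset.filter_subset _ _)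
    obtain ⟨q1, q2⟩ := hfam {y : ℝ | x < (y : EReal)} (measurableSet_ereal_lt x) J hJs (by
      intro j hj
      refine measure_mono_null ?_ (measure_union_null (Finset.mem_filter.mp (hJ hj)).2 hz)
      rintro y ⟨hy, hyx⟩
      simp only [mem_ofPred_eq, not_lt] at hyx
      rcases lt_or_eq_of_le hyx with h | h
      · exact Or.inl ⟨hy, h⟩
      · exact Or.inr h)
    obtain ⟨r1, r2, r3, r4⟩ := hprops {y : ℝ | x < (y : EReal)} (measurableSet_ereal_lt x) J hJs
    have := hR _ r1 r2 r3 r4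
    rw [q1, q2] at this
    refine this.trans_eq ?_
    rw [Finset.mul_sum, Finset.mul_sum, ← Finset.sum_sub_distrib]
    exact Finset.sum_congr rfl fun j _ => by ring
  · intro J hJ
    have hJs : J ⊆ s := hJ.trans Finset.sdiff_subset
    obtain ⟨q1, q2⟩ := hfam {y : ℝ | (y : EReal) < x} hmL J hJs (by
      intro j hj
      have hj' := hJ hj
      simp only [Finset.mem_sdiff, Finset.mem_filter, not_and] at hj'
      have h2 := (hsplit j hj'.1).resolve_left (hj'.2 hj'.1)
      refine measure_mono_null ?_ (measure_union_null h2 hz)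
      rintro y ⟨hy, hyx⟩
      simp only [mem_ofPred_eq, not_lt] at hyx
      rcases lt_or_eq_of_le hyx with h | h
      · exact Or.inl ⟨hy, h⟩
      · exact Or.inr h.symm)
    obtain ⟨r1, r2, r3, r4⟩ := hprops {y : ℝ | (y : EReal) < x} hmL J hJs
    have := LC_iff.mp hL _ r1 r2 r3 r4
    rw [q1, q2] at this
    refine this.trans_eq ?_
    rw [Finset.mul_sum, Finset.mul_sum, ← Finset.sum_sub_distrib]
    exact Finset.sum_congr rfl fun j _ => by ring

/-- For a finite union of disjoint intervals the gaps are determined by finitely many inequalities,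
which involve only the rescaled centres and the lengths. -/
lemma gapSet_cfg {lam : ℝ} (h0 : 0 ≤ lam) (h1 : lam < 1) {s : Finset ℤ} {c l : ℤ → ℝ}
    (hv : Valid s c l) : gapSet lam (cfg s c l) = gapD s (fun j => lam * c j) l := by
  apply Subset.antisymm _ (gapD_subset_gapSet h0 h1.le hv)
  apply gapSet_subset_gapD h0 (A := piece c l) (a := fun j => c j - l j / 2)
    (b := fun j => c j + l j / 2)
  · exact fun j hj => subset_biUnion_of_mem (u := fun j => piece c l j) hj
  · exact fun j _ => measurableSet_piece c l j
  · exact fun j _ => Ioo_subset_Icc_self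
  · exact hv.disj
  · exact fun j hj => volReal_piece (hv.pos j hj).le
  · exact fun j hj => integral_piece (hv.pos j hj).le
  · intro j hj
    nlinarith [hv.pos j hj]

/-! ### Collisions and the flow on finite unions of intervals -/

/-- The flow in multiplicative time `lam = 1 - t`: the identity at `lam = 1`, and the sliding map
otherwise. (At `lam = 1` every `p` is a gap, with cut `p` itself, so `slide 1 E` is empty.) -/
def Fl (lam : ℝ) (E : Set ℝ) : Set ℝ := open Classical in if lam = 1 then E else slide lam E

lemma Fl_one (E : Set ℝ) : Fl 1 E = E := by simp [Fl]

lemma Fl_of_lt {lam : ℝ} (h : lam < 1) (E : Set ℝ) : Fl lam E = slide lam E := by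
  simp [Fl, h.ne]

lemma Fl_congr (lam : ℝ) {E F : Set ℝ} (h : E =ᵐ[volume] F) : Fl lam E =ᵐ[volume] Fl lam F := by
  unfold Fl
  split_ifs
  · exact h
  · rw [slide_congr_ae h]; exact Filter.EventuallyEq.rfl

lemma Fl_mono {lam : ℝ} {E F : Set ℝ} (h : volume (E \ F) = 0) :
    volume (Fl lam E \ Fl lam F) = 0 := by
  unfold Fl
  split_ifs
  · exact h
  · rw [sdiff_eq_empty.mpr (slide_mono_ae h)]; exact measure_empty

lemma measurableSet_Fl {lam : ℝ} {E : Set ℝ} (h : MeasurableSet E) : MeasurableSet (Fl lam E) := by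
  unfold Fl
  split_ifs
  · exact h
  · exact (isOpen_slide lam E).measurableSet

lemma Valid.scale_mono {s : Finset ℤ} {c l : ℤ → ℝ} {lam mu : ℝ} (h0 : 0 ≤ lam) (h : lam ≤ mu)
    (hv : Valid s (fun j => lam * c j) l) : Valid s (fun j => mu * c j) l := by
  refine ⟨hv.pos, fun i hi j hj hij => (hv.sep i hi j hj hij).trans ?_⟩
  rw [← mul_sub, ← mul_sub, abs_mul, abs_mul, abs_of_nonneg h0, abs_of_nonneg (h0.trans h)]
  exact mul_le_mul_of_nonneg_right h (abs_nonneg _)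

/-- As long as the rescaled intervals do not overlap, they move rigidly. -/
lemma Fl_cfg {s : Finset ℤ} {c l : ℤ → ℝ} (hv : Valid s c l) {lam : ℝ} (h0 : 0 ≤ lam)
    (h1 : lam ≤ 1) (hv' : Valid s (fun j => lam * c j) l) :
    Fl lam (cfg s c l) = cfg s (fun j => lam * c j) l := by
  rcases h1.eq_or_lt with rfl | h1
  · simp [Fl_one]
  · rw [Fl_of_lt h1, slide, gapSet_cfg h0 h1 hv, gapD_of_valid hv', compl_compl]

/-- The semigroup law when no collision takes place during the first of the two steps; the second
step is arbitrary. -/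
lemma Fl_mul_cfg {s : Finset ℤ} {c l : ℤ → ℝ} (hv : Valid s c l) {lam mu : ℝ} (h0 : 0 ≤ lam)
    (h1 : lam ≤ 1) (hv' : Valid s (fun j => lam * c j) l) (hm0 : 0 ≤ mu) (hm1 : mu ≤ 1) :
    Fl (mu * lam) (cfg s c l) = Fl mu (Fl lam (cfg s c l)) := by
  rcases h1.eq_or_lt with rfl | h1
  · simp [Fl_one]
  rcases hm1.eq_or_lt with rfl | hm1
  · simp [Fl_one]
  have hlt : mu * lam < 1 := by nlinarith
  rw [Fl_cfg hv h0 h1.le hv', Fl_of_lt hlt, Fl_of_lt hm1, slide, slide,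
    gapSet_cfg (mul_nonneg hm0 h0) hlt hv, gapSet_cfg hm0 hm1 hv']
  simp only [mul_assoc]

/-- Sets which, up to null sets, are unions of at most `n` disjoint bounded intervals. -/
def FinU (n : ℕ) (E : Set ℝ) : Prop :=
  ∃ (s : Finset ℤ) (c l : ℤ → ℝ), s.card ≤ n ∧ Valid s c l ∧ E =ᵐ[volume] cfg s c l

/-- Two intervals that touch can be replaced by a single one. -/
lemma merge_aux {s : Finset ℤ} {C l : ℤ → ℝ} (hv : Valid s C l) {i j : ℤ} (hi : i ∈ s) (hj : j ∈ s)
    (hlt : C i < C j) (hC : C j - C i = (l i + l j) / 2) :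
    FinU (s.card - 1) (cfg s C l) := by
  classical
  have hij : i ≠ j := fun e => by rw [e] at hlt; exact lt_irrefl _ hlt
  let c' : ℤ → ℝ := Function.update C i (C i + l j / 2)
  let l' : ℤ → ℝ := Function.update l i (l i + l j)
  have hli := hv.pos i hi
  have hlj := hv.pos j hj
  have hsepi : ∀ k ∈ s, k ≠ i → k ≠ j → (l k + (l i + l j)) / 2 ≤ |C k - (C i + l j / 2)| := by
    intro k hk hki hkj
    have h1 := hv.sep k hk i hi hki
    have h2 := hv.sep k hk j hj hkj
    have h3 := hv.pos k hk
    rw [le_abs'] at h1 h2 ⊢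
    rcases h1 with h1 | h1 <;> rcases h2 with h2 | h2
    · left; linarith
    · left; linarith
    · linarith
    · right; linarith
  refine ⟨s.erase j, c', l', by rw [Finset.card_erase_of_mem hj], ⟨?_, ?_⟩, ?_⟩
  · intro k hk
    by_cases hki : k = i
    · subst hki; simp [l']; linarith
    · simp only [l', Function.update_of_ne hki]; exact hv.pos k (Finset.mem_of_mem_erase hk)
  · intro k hk m hm hkm
    obtain ⟨hkj, hk⟩ := Finset.mem_erase.mp hk
    obtain ⟨hmj, hm⟩ := Finset.mem_erase.mp hm
    by_cases hki : k = i
    · subst hki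
      have hmk : m ≠ k := fun e => hkm e.symm
      simp only [c', l', Function.update_self, Function.update_of_ne hmk]
      rw [abs_sub_comm, add_comm]
      exact hsepi m hm hmk hmj
    · by_cases hmi : m = i
      · subst hmi
        simp only [c', l', Function.update_self, Function.update_of_ne hki]
        exact hsepi k hk hki hkj
      · simp only [c', l', Function.update_of_ne hki, Function.update_of_ne hmi]
        exact hv.sep k hk m hm hkm
  · -- the merged system only adds the common endpoint
    have h1 : cfg s C l ⊆ cfg (s.erase j) c' l' := by
      intro y hy
      simp only [cfg, piece, mem_iUnion, mem_Ioo, exists_prop] at hy ⊢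
      obtain ⟨k, hk, hy1, hy2⟩ := hy
      by_cases hk' : k = i ∨ k = j
      · refine ⟨i, Finset.mem_erase.mpr ⟨hij, hi⟩, ?_⟩
        simp only [c', l', Function.update_self]
        rcases hk' with rfl | rfl <;> constructor <;> linarith
      · push Not at hk'
        refine ⟨k, Finset.mem_erase.mpr ⟨hk'.2, hk⟩, ?_⟩
        simp only [c', l', Function.update_of_ne hk'.1]
        exact ⟨hy1, hy2⟩
    have h2 : cfg (s.erase j) c' l' \ cfg s C l ⊆ {C i + l i / 2} := by
      rintro y ⟨hy, hn⟩
      simp only [cfg, piece, mem_iUnion, mem_Ioo, exists_prop, not_exists, not_and, not_lt] at hy hn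
      obtain ⟨k, hk, hy1, hy2⟩ := hy
      obtain ⟨hkj, hk⟩ := Finset.mem_erase.mp hk
      by_cases hki : k = i
      · subst hki
        simp only [c', l', Function.update_self] at hy1 hy2
        by_contra hne
        rcases lt_or_gt_of_ne hne with h | h
        · linarith [hn k hk (by linarith)]
        · linarith [hn j hj (by linarith)]
      · simp only [c', l', Function.update_of_ne hki] at hy1 hy2
        linarith [hn k hk hy1]
    exact (h1.eventuallyLE).antisymm (ae_le_set.mpr (measure_mono_null h2 (by simp)))

/-- The intervals can be contracted without overlap down to a parameter `l1` which is either `0` or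
the parameter at which two of them touch first. -/
lemma exists_first_collision {s : Finset ℤ} {c l : ℤ → ℝ} (hv : Valid s c l) :
    ∃ l1 : ℝ, 0 ≤ l1 ∧ l1 ≤ 1 ∧ Valid s (fun j => l1 * c j) l ∧
      (l1 = 0 ∨ (0 < l1 ∧ 0 < s.card ∧ FinU (s.card - 1) (cfg s (fun j => l1 * c j) l))) := by
  classical
  rcases s.offDiag.eq_empty_or_nonempty with he | hne
  · refine ⟨0, le_rfl, zero_le_one, ⟨hv.pos, fun i hi j hj hij => ?_⟩, Or.inl rfl⟩
    have : (i, j) ∈ s.offDiag := Finset.mem_offDiag.mpr ⟨hi, hj, hij⟩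
    rw [he] at this; simp at this
  · obtain ⟨⟨i, j⟩, hmem, hmax⟩ := Finset.exists_max_image s.offDiag
      (fun q => (l q.1 + l q.2) / 2 / |c q.1 - c q.2|) hne
    obtain ⟨hi, hj, hij⟩ := Finset.mem_offDiag.mp hmem
    simp only at hmax hij hi hj
    have hpos : ∀ a ∈ s, ∀ b ∈ s, a ≠ b → 0 < |c a - c b| := fun a ha b hb hab => by
      linarith [hv.sep a ha b hb hab, hv.pos a ha, hv.pos b hb]
    set l1 := (l i + l j) / 2 / |c i - c j| with hl1
    have h0 : 0 < l1 := div_pos (by linarith [hv.pos i hi, hv.pos j hj]) (hpos i hi j hj hij)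
    have h1 : l1 ≤ 1 := (div_le_one (hpos i hi j hj hij)).mpr (hv.sep i hi j hj hij)
    have hv1 : Valid s (fun j => l1 * c j) l := by
      refine ⟨hv.pos, fun a ha b hb hab => ?_⟩
      have := hmax (a, b) (Finset.mem_offDiag.mpr ⟨ha, hb, hab⟩)
      simp only at this
      rw [div_le_iff₀ (hpos a ha b hb hab)] at this
      rwa [← mul_sub, abs_mul, abs_of_pos h0]
    have heq : l1 * |c i - c j| = (l i + l j) / 2 := div_mul_cancel₀ _ (hpos i hi j hj hij).ne'
    refine ⟨l1, h0.le, h1, hv1, Or.inr ⟨h0, Finset.card_pos.mpr ⟨i, hi⟩, ?_⟩⟩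
    have hp := hpos i hi j hj hij
    rcases abs_cases (c i - c j) with ⟨h5, _⟩ | ⟨h5, _⟩
    · rw [h5] at heq hp
      exact merge_aux hv1 hj hi (by nlinarith) (by linarith)
    · rw [h5] at heq hp
      exact merge_aux hv1 hi hj (by nlinarith) (by linarith)

lemma volReal_symmDiff_cfg (s : Finset ℤ) (c d l : ℤ → ℝ) :
    volume.real (symmDiff (cfg s c l) (cfg s d l)) ≤ ∑ j ∈ s, 2 * |c j - d j| := by
  have hsub : symmDiff (cfg s c l) (cfg s d l) ⊆ ⋃ j ∈ s,
      (Icc (c j - l j / 2) (d j - l j / 2) ∪ Icc (d j - l j / 2) (c j - l j / 2)) ∪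
      (Icc (c j + l j / 2) (d j + l j / 2) ∪ Icc (d j + l j / 2) (c j + l j / 2)) := by
    have key : ∀ c d : ℤ → ℝ, cfg s c l \ cfg s d l ⊆ ⋃ j ∈ s,
        (Icc (c j - l j / 2) (d j - l j / 2)) ∪ (Icc (d j + l j / 2) (c j + l j / 2)) := by
      rintro c d y ⟨hy, hn⟩
      simp only [cfg, piece, mem_iUnion, mem_Ioo, exists_prop, not_exists, not_and, not_lt] at hy hn
      simp only [mem_iUnion, exists_prop]
      obtain ⟨k, hk, hy1, hy2⟩ := hy
      refine ⟨k, hk, ?_⟩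
      by_cases h : d k - l k / 2 < y
      · exact Or.inr ⟨hn k hk h, hy2.le⟩
      · exact Or.inl ⟨hy1.le, not_lt.mp h⟩
    rintro y (hy | hy)
    · have := key c d hy
      simp only [mem_iUnion, exists_prop] at this ⊢
      obtain ⟨k, hk, h | h⟩ := this
      · exact ⟨k, hk, Or.inl (Or.inl h)⟩
      · exact ⟨k, hk, Or.inr (Or.inr h)⟩
    · have := key d c hy
      simp only [mem_iUnion, exists_prop] at this ⊢
      obtain ⟨k, hk, h | h⟩ := this
      · exact ⟨k, hk, Or.inl (Or.inr h)⟩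
      · exact ⟨k, hk, Or.inr (Or.inl h)⟩
  have hpair : ∀ a b : ℝ, volume (Icc a b ∪ Icc b a) ≤ ENNReal.ofReal |a - b| := by
    intro a b
    have : Icc a b ∪ Icc b a ⊆ uIcc a b := by
      rintro y (hy | hy)
      · exact Icc_subset_uIcc hy
      · exact Icc_subset_uIcc' hy
    refine (measure_mono this).trans ?_
    rw [Real.volume_interval, abs_sub_comm]
  have hle : volume (symmDiff (cfg s c l) (cfg s d l)) ≤
      ENNReal.ofReal (∑ j ∈ s, 2 * |c j - d j|) := by
    refine (measure_mono hsub).trans ((measure_biUnion_finset_le s _).trans ?_)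
    rw [ENNReal.ofReal_sum_of_nonneg fun j _ => by positivity]
    refine Finset.sum_le_sum fun j _ => (measure_union_le _ _).trans ?_
    refine (add_le_add (hpair _ _) (hpair _ _)).trans ?_
    rw [← ENNReal.ofReal_add (abs_nonneg _) (abs_nonneg _)]
    apply ENNReal.ofReal_le_ofReal
    rw [show c j - l j / 2 - (d j - l j / 2) = c j - d j by ring,
      show c j + l j / 2 - (d j + l j / 2) = c j - d j by ring]
    linarith
  exact ENNReal.toReal_le_of_le_ofReal (Finset.sum_nonneg fun j _ => by positivity) hle

/-- The properties of the flow started at `E`, a union of at most `n` intervals up to null sets: it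
keeps this form, preserves measure, satisfies the semigroup law and is Lipschitz in `lam`. -/
structure GoodFlow (n : ℕ) (E : Set ℝ) : Prop where
  fin : ∀ lam, 0 ≤ lam → lam ≤ 1 → FinU n (Fl lam E)
  vol : ∀ lam, 0 ≤ lam → lam ≤ 1 → volume (Fl lam E) = volume E
  semi : ∀ lam mu, 0 ≤ lam → lam ≤ 1 → 0 ≤ mu → mu ≤ 1 →
    Fl (mu * lam) E =ᵐ[volume] Fl mu (Fl lam E)
  lip : ∃ K : ℝ, 0 ≤ K ∧ ∀ lam mu, 0 ≤ lam → lam ≤ 1 → 0 ≤ mu → mu ≤ 1 →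
    volume.real (symmDiff (Fl lam E) (Fl mu E)) ≤ K * |lam - mu|

lemma symmDiff_congr_ae {A A' B B' : Set ℝ} (h1 : A =ᵐ[volume] A') (h2 : B =ᵐ[volume] B') :
    (symmDiff A B : Set ℝ) =ᵐ[volume] (symmDiff A' B' : Set ℝ) :=
  (h1.diff h2).union (h2.diff h1)

lemma FinU.ne_top {n : ℕ} {E : Set ℝ} (h : FinU n E) : volume E ≠ ⊤ := by
  obtain ⟨s, c, l, -, -, h⟩ := h
  rw [measure_congr h]; exact bounded_measure_ne_top (bounded_cfg s c l)

lemma volReal_symmDiff_triangle {A B C : Set ℝ} (hA : volume A ≠ ⊤) (hB : volume B ≠ ⊤)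
    (hC : volume C ≠ ⊤) : volume.real (symmDiff A C) ≤
      volume.real (symmDiff A B) + volume.real (symmDiff B C) := by
  have f : ∀ {A B : Set ℝ}, volume A ≠ ⊤ → volume B ≠ ⊤ → volume (symmDiff A B) ≠ ⊤ :=
    fun {A B} hA hB => ((measure_mono (symmDiff_subset_union)).trans_lt
      ((measure_union_le A B).trans_lt (ENNReal.add_lt_top.mpr ⟨hA.lt_top, hB.lt_top⟩))).ne
  rw [Measure.real, Measure.real, Measure.real, ← ENNReal.toReal_add (f hA hB) (f hB hC)]
  exact ENNReal.toReal_mono (ENNReal.add_ne_top.mpr ⟨f hA hB, f hB hC⟩)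
    (measure_symmDiff_le _ _ _)

/-- Rigid motion up to the first collision, for sets which are finite unions up to null sets. -/
lemma FinU.collision {n : ℕ} {E : Set ℝ} (hE : FinU n E) :
    ∃ (s : Finset ℤ) (c l : ℤ → ℝ) (l1 : ℝ), s.card ≤ n ∧ Valid s c l ∧ E =ᵐ[volume] cfg s c l ∧
      0 ≤ l1 ∧ l1 ≤ 1 ∧
      (∀ lam, l1 ≤ lam → lam ≤ 1 → Valid s (fun j => lam * c j) l ∧
        Fl lam E =ᵐ[volume] cfg s (fun j => lam * c j) l ∧
        ∀ mu, 0 ≤ mu → mu ≤ 1 → Fl (mu * lam) E =ᵐ[volume] Fl mu (Fl lam E)) ∧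
      (l1 = 0 ∨ (0 < l1 ∧ 0 < n ∧ FinU (n - 1) (Fl l1 E))) := by
  obtain ⟨s, c, l, hn, hv, hae⟩ := hE
  obtain ⟨l1, h0, h1, hv1, hor⟩ := exists_first_collision hv
  refine ⟨s, c, l, l1, hn, hv, hae, h0, h1, ?_, ?_⟩
  · intro lam ha hb
    have hvl := hv1.scale_mono h0 ha
    refine ⟨hvl, ?_, ?_⟩
    · rw [← Fl_cfg hv (h0.trans ha) hb hvl]; exact Fl_congr _ hae
    · intro mu m0 m1
      refine (Fl_congr _ hae).trans ?_
      rw [Fl_mul_cfg hv (h0.trans ha) hb hvl m0 m1]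
      exact Fl_congr _ (Fl_congr _ hae.symm)
  · rcases hor with h | ⟨hp, hc, s', c', l', hcard, hv', hae'⟩
    · exact Or.inl h
    · refine Or.inr ⟨hp, by omega, s', c', l', by omega, hv', ?_⟩
      refine (Fl_congr l1 hae).trans ?_
      rw [Fl_cfg hv h0 h1 hv1]
      exact hae'

lemma FinU.mono {n m : ℕ} (h : n ≤ m) {E : Set ℝ} (hE : FinU n E) : FinU m E := by
  obtain ⟨s, c, l, hn, hv⟩ := hE
  exact ⟨s, c, l, hn.trans h, hv⟩

/-- Induction on the number of intervals: rigid motion up to the first collision, then the flow of a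
union of fewer intervals. -/
lemma goodFlow (n : ℕ) : ∀ E, FinU n E → GoodFlow n E := by
  induction n with
  | zero =>
    intro E hE
    obtain ⟨s, c, l, l1, hn, hv, hae, h0, h1, hrig, hor⟩ := hE.collision
    have hl1 : l1 = 0 := by
      rcases hor with h | h
      · exact h
      · exact absurd h.2.1 (lt_irrefl 0)
    subst hl1
    have hs : s = ∅ := Finset.card_eq_zero.mp (Nat.le_zero.mp hn)
    subst hs
    have hemp : ∀ c : ℤ → ℝ, cfg ∅ c l = ∅ := fun c => by simp [cfg]
    refine ⟨fun lam a b => ⟨∅, _, l, hn, (hrig lam a b).1, (hrig lam a b).2.1⟩, fun lam a b => ?_,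
      fun lam mu a b m0 m1 => (hrig lam a b).2.2 mu m0 m1, 0, le_rfl, fun lam mu a b m0 m1 => ?_⟩
    · rw [measure_congr (hrig lam a b).2.1, measure_congr hae, hemp, hemp]
    · rw [measureReal_congr (symmDiff_congr_ae (hrig lam a b).2.1 (hrig mu m0 m1).2.1), hemp, hemp,
        symmDiff_self]
      simp
  | succ n ih =>
    intro E hE
    obtain ⟨s, c, l, l1, hn, hv, hae, h0, h1, hrig, hor⟩ := hE.collision
    have hE' := hE
    -- after the first collision the flow is that of a set with fewer intervals
    have late : ∀ lam, 0 ≤ lam → lam < l1 → 0 < l1 ∧ GoodFlow n (Fl l1 E) ∧ 0 ≤ lam / l1 ∧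
        lam / l1 ≤ 1 ∧ Fl lam E =ᵐ[volume] Fl (lam / l1) (Fl l1 E) := by
      intro lam a b
      have hp : 0 < l1 := a.trans_lt b
      have hf : FinU n (Fl l1 E) := by
        rcases hor with h | h
        · exact absurd h hp.ne'
        · simpa using h.2.2
      have d0 : 0 ≤ lam / l1 := div_nonneg a hp.le
      have d1 : lam / l1 ≤ 1 := (div_le_one hp).mpr b.le
      refine ⟨hp, ih _ hf, d0, d1, ?_⟩
      have := (hrig l1 le_rfl h1).2.2 (lam / l1) d0 d1
      rwa [div_mul_cancel₀ _ hp.ne'] at this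
    have volrig : ∀ lam, l1 ≤ lam → lam ≤ 1 → volume (Fl lam E) = volume E := by
      intro lam a b
      obtain ⟨q1, q2, -⟩ := hrig lam a b
      rw [measure_congr q2, measure_congr hae,
        ← ENNReal.toReal_eq_toReal_iff' (bounded_measure_ne_top (bounded_cfg _ _ _))
          (bounded_measure_ne_top (bounded_cfg _ _ _))]
      exact q1.volReal.trans hv.volReal.symm
    have finall : ∀ lam, 0 ≤ lam → lam ≤ 1 → FinU (n + 1) (Fl lam E) := by
      intro lam a b
      rcases le_or_gt l1 lam with hle | hlt
      · exact ⟨s, _, l, hn, (hrig lam hle b).1, (hrig lam hle b).2.1⟩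
      · obtain ⟨hp, hg, d0, d1, hae1⟩ := late lam a hlt
        obtain ⟨s', c', l', q1, q2, q3⟩ := hg.fin _ d0 d1
        exact ⟨s', c', l', q1.trans n.le_succ, q2, hae1.trans q3⟩
    refine ⟨finall, ?_, ?_, ?_⟩
    · intro lam a b
      rcases le_or_gt l1 lam with hle | hlt
      · exact volrig lam hle b
      · obtain ⟨hp, hg, d0, d1, hae1⟩ := late lam a hlt
        rw [measure_congr hae1, hg.vol _ d0 d1, volrig l1 le_rfl h1]
    · intro lam mu a b m0 m1
      rcases le_or_gt l1 lam with hle | hlt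
      · exact (hrig lam hle b).2.2 mu m0 m1
      · obtain ⟨hp, hg, d0, d1, hae1⟩ := late lam a hlt
        obtain ⟨-, -, -, -, hae2⟩ := late (mu * lam) (mul_nonneg m0 a) (by nlinarith)
        rw [mul_div_assoc] at hae2
        exact hae2.trans ((hg.semi _ mu d0 d1 m0 m1).trans (Fl_congr _ hae1.symm))
    · -- Lipschitz constants add up across the collision
      have hK0 : ∀ lam mu, l1 ≤ lam → lam ≤ 1 → l1 ≤ mu → mu ≤ 1 →
          volume.real (symmDiff (Fl lam E) (Fl mu E)) ≤ (∑ j ∈ s, 2 * |c j|) * |lam - mu| := by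
        intro lam mu a b m0 m1
        rw [measureReal_congr (symmDiff_congr_ae (hrig lam a b).2.1 (hrig mu m0 m1).2.1)]
        refine (volReal_symmDiff_cfg _ _ _ _).trans_eq ?_
        rw [Finset.sum_mul]
        refine Finset.sum_congr rfl fun j _ => ?_
        rw [← sub_mul, abs_mul]; ring
      have hK1 : ∃ K1 : ℝ, 0 ≤ K1 ∧ ∀ lam mu, 0 ≤ lam → lam ≤ l1 → 0 ≤ mu → mu ≤ l1 →
          volume.real (symmDiff (Fl lam E) (Fl mu E)) ≤ K1 * |lam - mu| := by
        rcases hor with h | h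
        · refine ⟨0, le_rfl, fun lam mu a b m0 m1 => ?_⟩
          have e1 : lam = 0 := by linarith
          have e2 : mu = 0 := by linarith
          subst e1; subst e2; simp
        · obtain ⟨hp, -, hf⟩ := h
          have hg := ih _ (by simpa using hf)
          obtain ⟨K, k0, hK⟩ := hg.lip
          have hcl : ∀ lam, 0 ≤ lam → lam ≤ l1 → Fl lam E =ᵐ[volume] Fl (lam / l1) (Fl l1 E) := by
            intro lam a b
            have := (hrig l1 le_rfl h1).2.2 (lam / l1) (div_nonneg a hp.le) ((div_le_one hp).mpr b)
            rwa [div_mul_cancel₀ _ hp.ne'] at this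
          refine ⟨K / l1, by positivity, fun lam mu a b m0 m1 => ?_⟩
          rw [measureReal_congr (symmDiff_congr_ae (hcl lam a b) (hcl mu m0 m1))]
          refine (hK _ _ (div_nonneg a hp.le) ((div_le_one hp).mpr b) (div_nonneg m0 hp.le)
            ((div_le_one hp).mpr m1)).trans_eq ?_
          rw [← sub_div, abs_div, abs_of_pos hp]; ring
      obtain ⟨K1, k1, hK1⟩ := hK1
      have k0 : (0:ℝ) ≤ ∑ j ∈ s, 2 * |c j| := Finset.sum_nonneg fun j _ => by positivity
      refine ⟨(∑ j ∈ s, 2 * |c j|) + K1, by positivity, ?_⟩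
      have main : ∀ lam mu, 0 ≤ lam → lam ≤ mu → mu ≤ 1 →
          volume.real (symmDiff (Fl lam E) (Fl mu E)) ≤
            ((∑ j ∈ s, 2 * |c j|) + K1) * |lam - mu| := by
        intro lam mu a b m1
        rcases le_total l1 lam with hle | hle
        · refine (hK0 lam mu hle (b.trans m1) (hle.trans b) m1).trans ?_
          exact mul_le_mul_of_nonneg_right (by linarith) (abs_nonneg _)
        rcases le_total mu l1 with hle' | hle'
        · refine (hK1 lam mu a hle (a.trans b) hle').trans ?_
          exact mul_le_mul_of_nonneg_right (by linarith) (abs_nonneg _)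
        have t := volReal_symmDiff_triangle (finall lam a (b.trans m1)).ne_top
          (finall l1 h0 h1).ne_top (finall mu (a.trans b) m1).ne_top
        have t1 := hK1 lam l1 a hle h0 le_rfl
        have t2 := hK0 l1 mu le_rfl h1 hle' m1
        rw [abs_of_nonpos (by linarith)] at t1 t2 ⊢
        nlinarith [mul_nonneg k0 (sub_nonneg.mpr hle), mul_nonneg k1 (sub_nonneg.mpr hle')]
      intro lam mu a b m0 m1
      rcases le_total lam mu with h | h
      · exact main lam mu a h m1
      · rw [symmDiff_comm, abs_sub_comm]; exact main mu lam m0 h b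

/-! ### Measure preservation and contractivity for general sets -/

/-- The half-open dyadic interval `[k / 2 ^ n, (k + 1) / 2 ^ n)`; see `cell_eq_Ico`. -/
def cell (n : ℕ) (k : ℤ) : Set ℝ := {x | ⌊x * 2 ^ n⌋ = k}

/-- The indices of the cells of generation `n` that lie in `U` and, up to one cell, in
`[-2 ^ n, 2 ^ n]`. -/
def cellIdx (U : Set ℝ) (n : ℕ) : Finset ℤ :=
  open Classical in (Finset.Icc (-(4 ^ n : ℤ)) (4 ^ n)).filter fun k => cell n k ⊆ U

/-- The union of the finitely many cells indexed by `cellIdx U n`; these sets increase to `U` when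
`U` is open. -/
def dyadic (U : Set ℝ) (n : ℕ) : Set ℝ := ⋃ k ∈ cellIdx U n, cell n k

lemma mem_cell {n : ℕ} {k : ℤ} {x : ℝ} : x ∈ cell n k ↔ ⌊x * 2 ^ n⌋ = k := Iff.rfl

lemma cell_eq_Ico (n : ℕ) (k : ℤ) :
    cell n k = Ico ((k : ℝ) / 2 ^ n) (((k : ℝ) + 1) / 2 ^ n) := by
  ext x
  have h2 : (0:ℝ) < 2 ^ n := by positivity
  rw [mem_cell, Int.floor_eq_iff, mem_Ico, div_le_iff₀ h2, lt_div_iff₀ h2]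

lemma measurableSet_cell (n : ℕ) (k : ℤ) : MeasurableSet (cell n k) := by
  rw [cell_eq_Ico]; exact measurableSet_Ico

lemma bounded_cell (n : ℕ) (k : ℤ) : Bornology.IsBounded (cell n k) := by
  rw [cell_eq_Ico]; exact Metric.isBounded_Ico _ _

lemma volReal_cell (n : ℕ) (k : ℤ) : volume.real (cell n k) = 1 / 2 ^ n := by
  have h2 : (0:ℝ) < 2 ^ n := by positivity
  rw [cell_eq_Ico, Real.volume_real_Ico_of_le (by gcongr; linarith)]; ring

lemma disjoint_cell (n : ℕ) (s : Set ℤ) : s.PairwiseDisjoint (cell n) := by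
  intro i _ j _ hij
  rw [Function.onFun, Set.disjoint_left]
  intro x h1 h2
  exact hij (h1.symm.trans h2)

lemma mem_dyadic {U : Set ℝ} {n : ℕ} {x : ℝ} : x ∈ dyadic U n ↔
    (-(4 ^ n : ℤ) ≤ ⌊x * 2 ^ n⌋ ∧ ⌊x * 2 ^ n⌋ ≤ 4 ^ n) ∧ cell n ⌊x * 2 ^ n⌋ ⊆ U := by
  simp only [dyadic, cellIdx, Finset.mem_filter, Finset.mem_Icc, mem_iUnion, mem_cell, exists_prop]
  constructor
  · rintro ⟨k, h, rfl⟩; exact h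
  · intro h; exact ⟨_, h, rfl⟩

lemma dyadic_subset (U : Set ℝ) (n : ℕ) : dyadic U n ⊆ U := fun _ hx => (mem_dyadic.mp hx).2 rfl

lemma measurableSet_dyadic (U : Set ℝ) (n : ℕ) : MeasurableSet (dyadic U n) :=
  Finset.measurableSet_biUnion _ fun k _ => measurableSet_cell n k

lemma floor_double (x : ℝ) (n : ℕ) :
    2 * ⌊x * 2 ^ n⌋ ≤ ⌊x * 2 ^ (n + 1)⌋ ∧ ⌊x * 2 ^ (n + 1)⌋ ≤ 2 * ⌊x * 2 ^ n⌋ + 1 := by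
  constructor
  · rw [Int.le_floor, pow_succ]
    push_cast
    linarith [Int.floor_le (x * 2 ^ n)]
  · rw [← Int.lt_add_one_iff, Int.floor_lt, pow_succ]
    push_cast
    linarith [Int.lt_floor_add_one (x * 2 ^ n)]

lemma monotone_dyadic (U : Set ℝ) : Monotone (dyadic U) := by
  refine monotone_nat_of_le_succ fun n x hx => ?_
  rw [mem_dyadic] at hx ⊢
  obtain ⟨⟨h1, h2⟩, h3⟩ := hx
  have h4 := floor_double x n
  refine ⟨?_, fun y hy => h3 ?_⟩
  · have : (4:ℤ) ^ (n + 1) = 4 * 4 ^ n := by ring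
    have p : (1:ℤ) ≤ 4 ^ n := one_le_pow₀ (by norm_num)
    rw [this]; constructor <;> linarith
  · rw [mem_cell] at hy ⊢
    have h5 := floor_double y n
    omega

lemma iUnion_dyadic {U : Set ℝ} (hU : IsOpen U) : ⋃ n, dyadic U n = U := by
  apply Subset.antisymm (iUnion_subset (dyadic_subset U))
  intro x hx
  obtain ⟨e, he, hball⟩ := Metric.isOpen_iff.mp hU x hx
  obtain ⟨n1, hn1⟩ := pow_unbounded_of_one_lt (1 / e) (one_lt_two)
  obtain ⟨n2, hn2⟩ := pow_unbounded_of_one_lt (|x| + 1) (one_lt_two (α := ℝ))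
  have ha : (1:ℝ) / e < 2 ^ (max n1 n2) := hn1.trans_le (by gcongr; norm_num; exact le_max_left _ _)
  have hb : |x| + 1 < (2:ℝ) ^ (max n1 n2) :=
    hn2.trans_le (by gcongr; norm_num; exact le_max_right _ _)
  rw [mem_iUnion]
  refine ⟨max n1 n2, ?_⟩
  set n := max n1 n2
  have h2 : (1:ℝ) ≤ 2 ^ n := one_le_pow₀ (by norm_num)
  have h4 : (4:ℝ) ^ n = 2 ^ n * 2 ^ n := by rw [← mul_pow]; norm_num
  rw [mem_dyadic]
  obtain ⟨x1, x2⟩ := abs_le.mp (show |x| ≤ |x| from le_rfl)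
  refine ⟨⟨?_, ?_⟩, fun y hy => hball ?_⟩
  · rw [Int.le_floor]; push_cast; rw [h4]; nlinarith
  · have := Int.floor_le (x * 2 ^ n)
    have h : (⌊x * 2 ^ n⌋ : ℝ) ≤ 4 ^ n := by rw [h4]; nlinarith
    exact_mod_cast h
  · rw [mem_cell] at hy
    have a1 := Int.floor_le (x * 2 ^ n)
    have a2 := Int.lt_floor_add_one (x * 2 ^ n)
    have b1 := Int.floor_le (y * 2 ^ n)
    have b2 := Int.lt_floor_add_one (y * 2 ^ n)
    rw [hy] at b1 b2
    rw [div_lt_iff₀ he] at ha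
    rw [Metric.mem_ball, Real.dist_eq, abs_lt]
    constructor <;> nlinarith

lemma finU_dyadic (U : Set ℝ) (n : ℕ) : FinU (cellIdx U n).card (dyadic U n) := by
  have h2 : (0:ℝ) < 2 ^ n := by positivity
  refine ⟨cellIdx U n, fun k => ((k : ℝ) + 1 / 2) / 2 ^ n, fun _ => 1 / 2 ^ n, le_rfl,
    ⟨fun _ _ => by positivity, fun i _ j _ hij => ?_⟩, ?_⟩
  · rw [← sub_div, abs_div, abs_of_pos h2, ← add_div, div_div, mul_comm, ← div_div]
    gcongr
    have h : (1:ℝ) ≤ |((i - j : ℤ) : ℝ)| := by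
      exact_mod_cast Int.one_le_abs (sub_ne_zero.mpr hij)
    push_cast at h
    rw [show (i:ℝ) + 1 / 2 - (j + 1 / 2) = i - j by ring]
    linarith
  · have h1 : cfg (cellIdx U n) (fun k => ((k : ℝ) + 1 / 2) / 2 ^ n) (fun _ => 1 / 2 ^ n) ⊆
        dyadic U n := by
      refine iUnion₂_mono fun k _ => ?_
      rw [cell_eq_Ico, piece]
      refine Subset.trans (Eq.subset ?_) Ioo_subset_Ico_self
      congr 1 <;> field_simp <;> ring
    have h3 : dyadic U n \ cfg (cellIdx U n) (fun k => ((k : ℝ) + 1 / 2) / 2 ^ n)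
        (fun _ => 1 / 2 ^ n) ⊆ range fun k : ℤ => (k : ℝ) / 2 ^ n := by
      rintro x ⟨hx, hn⟩
      simp only [dyadic, mem_iUnion, exists_prop] at hx
      obtain ⟨k, hk, hx⟩ := hx
      rw [cell_eq_Ico] at hx
      refine ⟨k, ?_⟩
      by_contra hne
      apply hn
      refine mem_biUnion hk ?_
      rw [piece]
      have : x ∈ Ioo ((k : ℝ) / 2 ^ n) (((k : ℝ) + 1) / 2 ^ n) :=
        ⟨lt_of_le_of_ne hx.1 hne, hx.2⟩
      convert this using 2 <;> field_simp <;> ring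
    exact ((h1.eventuallyLE).antisymm
      (ae_le_set.mpr (((countable_range _).mono h3).measure_zero _))).symm

/-- An open set slightly larger than `E`, almost exhausted by finitely many dyadic cells. -/
lemma exists_dyadic {E : Set ℝ} (hm : MeasurableSet E) (hf : volume E ≠ ⊤) {e : ℝ} (he : 0 < e) :
    ∃ U, IsOpen U ∧ E ⊆ U ∧ volume U ≠ ⊤ ∧ volume.real (U \ E) < e ∧
      ∃ n, volume.real (U \ dyadic U n) < e := by
  obtain ⟨U, hsub, hU, hlt⟩ := E.exists_isOpen_lt_add (μ := volume) hf
    (ε := ENNReal.ofReal e) (by simpa using he)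
  have hUf : volume U ≠ ⊤ := ne_top_of_lt hlt
  refine ⟨U, hU, hsub, hUf, ?_, ?_⟩
  · rw [measureReal_sdiff hsub hm hUf]
    have := (ENNReal.toReal_lt_toReal hUf (by finiteness)).mpr hlt
    rw [ENNReal.toReal_add hf (by finiteness), ENNReal.toReal_ofReal he.le] at this
    simp only [Measure.real]; linarith
  · have ht := tendsto_measure_iUnion_atTop (μ := volume) (monotone_dyadic U)
    rw [iUnion_dyadic hU] at ht
    have ht' := (ENNReal.tendsto_toReal hUf).comp ht
    obtain ⟨n, hn⟩ := (ht'.eventually (lt_mem_nhds (sub_lt_self (volume U).toReal he))).exists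
    refine ⟨n, ?_⟩
    rw [measureReal_sdiff (dyadic_subset U n) (measurableSet_dyadic U n) hUf]
    simp only [Function.comp] at hn
    simp only [Measure.real]; linarith

/-- By outer regularity and `slide_iUnion` the bound reduces to finite unions of intervals. -/
lemma volume_slide_le {lam : ℝ} (h0 : 0 ≤ lam) (h1 : lam < 1) (E : Set ℝ) :
    volume (slide lam E) ≤ volume E := by
  rw [E.measure_eq_iInf_isOpen]
  refine le_iInf₂ fun U hU => le_iInf fun ho => ?_
  refine (measure_mono (slide_mono_ae (F := U) (by simp [sdiff_eq_empty.mpr hU]))).trans ?_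
  rw [← iUnion_dyadic ho, slide_iUnion lam (monotone_dyadic U) (measurableSet_dyadic U)]
  have hmono : Monotone fun n => slide lam (dyadic U n) := fun a b hab =>
    slide_mono_ae (by simp [sdiff_eq_empty.mpr (monotone_dyadic U hab)])
  rw [hmono.measure_iUnion, (monotone_dyadic U).measure_iUnion]
  refine iSup_mono fun n => ?_
  have := (goodFlow _ _ (finU_dyadic U n)).vol lam h0 h1.le
  rw [Fl_of_lt h1] at this
  exact this.le

/-- Most of the mass of `E` lies in small cells in which `E` is dense. The part of `E` in such a cell
is replaced by an interval with the same mass and centre of mass; the image of the resulting finite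
union is contained in that of `E` and has the same measure as the union. -/
lemma le_volReal_slide {lam : ℝ} (h0 : 0 ≤ lam) (h1 : lam < 1) {E : Set ℝ} (hm : MeasurableSet E)
    (hf : volume E ≠ ⊤) : volume.real E ≤ volume.real (slide lam E) := by
  classical
  -- a cell is kept when the density of `E` in it exceeds `θ`, so that it moves as one cluster
  obtain ⟨θ, t1, t2⟩ := exists_between (show 2 * lam / (1 + lam) < 1 by
    rw [div_lt_one (by linarith)]; linarith)
  have t0 : 0 ≤ θ := le_trans (by positivity) t1.le
  rw [div_lt_iff₀ (by linarith)] at t1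
  refine le_of_forall_pos_le_add fun ε hε => ?_
  set e := (1 - θ) * ε / 2 with hedef
  have he : 0 < e := by have := sub_pos.mpr t2; positivity
  obtain ⟨U, hU, hEU, hUf, hUE, n, hn⟩ := exists_dyadic hm hf he
  have h2 : (0:ℝ) < 2 ^ n := by positivity
  set A : ℤ → Set ℝ := fun k => E ∩ cell n k with hA
  set l : ℤ → ℝ := fun k => volume.real (A k) with hl
  set c : ℤ → ℝ := fun k => (∫ y in A k, y) / l k with hc
  set s := (cellIdx U n).filter fun k => θ * (1 / 2 ^ n) < l k with hs
  have hAm : ∀ k, MeasurableSet (A k) := fun k => hm.inter (measurableSet_cell n k)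
  have hAb : ∀ k, Bornology.IsBounded (A k) := fun k => (bounded_cell n k).subset inter_subset_right
  have hpos : ∀ k ∈ s, 0 < l k := fun k hk =>
    lt_of_le_of_lt (by positivity) (Finset.mem_filter.mp hk).2
  have hIcc : ∀ k, A k ⊆ Icc ((k:ℝ) / 2 ^ n) (((k:ℝ) + 1) / 2 ^ n) := fun k y hy => by
    have := hy.2; rw [cell_eq_Ico] at this; exact Ico_subset_Icc_self this
  have hcl : ∀ k ∈ s, ∫ y in A k, y = c k * l k := fun k hk =>
    (div_mul_cancel₀ _ (hpos k hk).ne').symm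
  have hclo : ∀ k ∈ s, (k:ℝ) / 2 ^ n + l k / 2 ≤ c k := fun k hk => by
    have := bathtub (hAm k) (hAb k) (fun y hy => (hIcc k hy).1)
    rw [hcl k hk] at this
    have hp := hpos k hk
    have : ((k:ℝ) / 2 ^ n + l k / 2) * l k ≤ c k * l k := by
      change _ * l k + l k ^ 2 / 2 ≤ _ at this
      linarith
    exact le_of_mul_le_mul_right this hp
  have hchi : ∀ k ∈ s, c k ≤ ((k:ℝ) + 1) / 2 ^ n - l k / 2 := fun k hk => by
    have := bathtub_upper (hAm k) (hAb k) (fun y hy => (hIcc k hy).2)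
    rw [hcl k hk] at this
    have hp := hpos k hk
    have : c k * l k ≤ (((k:ℝ) + 1) / 2 ^ n - l k / 2) * l k := by
      change _ ≤ _ * l k - l k ^ 2 / 2 at this
      linarith
    exact le_of_mul_le_mul_right this hp
  have hvlt : ∀ i ∈ s, ∀ j ∈ s, i < j → (l i + l j) / 2 ≤ c j - c i := fun i hi j hj hij => by
    have h : ((i:ℝ) + 1) / 2 ^ n ≤ (j:ℝ) / 2 ^ n := by
      gcongr; exact_mod_cast hij
    linarith [hclo j hj, hchi i hi]
  have hv : Valid s c l := ⟨hpos, fun i hi j hj hij => by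
    rcases lt_or_gt_of_ne hij with h | h
    · rw [abs_sub_comm]; exact (hvlt i hi j hj h).trans (le_abs_self _)
    · rw [add_comm]; exact (hvlt j hj i hi h).trans (le_abs_self _)⟩
  have hdis : ∀ t : Set ℤ, t.PairwiseDisjoint A := fun t =>
    (disjoint_cell n t).mono fun k => inter_subset_right
  have hsub : slide lam (cfg s c l) ⊆ slide lam E := by
    rw [slide, slide, compl_subset_compl, gapSet_cfg h0 h1 hv]
    apply gapSet_subset_gapD h0 (A := A) (fun j _ => inter_subset_left) (fun j _ => hAm j)
      (fun j _ => hIcc j) (hdis _) (fun j _ => rfl) hcl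
    intro j hj
    have := (Finset.mem_filter.mp hj).2
    have e1 : ((j:ℝ) + 1) / 2 ^ n - j / 2 ^ n = 1 / 2 ^ n := by ring
    rw [e1]
    have hp : 0 < 1 / (2:ℝ) ^ n := by positivity
    nlinarith
  have hslf : volume (slide lam E) ≠ ⊤ := ne_top_of_le_ne_top hf (volume_slide_le h0 h1 E)
  have hge : ∑ j ∈ s, l j ≤ volume.real (slide lam E) := by
    have := (goodFlow s.card _ ⟨s, c, l, le_rfl, hv, Filter.EventuallyEq.rfl⟩).vol lam h0 h1.le
    rw [Fl_of_lt h1] at this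
    rw [← hv.volReal, Measure.real, ← this, ← Measure.real]
    exact measureReal_mono hsub hslf
  -- mass lost in the discarded cells
  have hUEf : volume (U \ E) ≠ ⊤ := measure_ne_top_of_subset sdiff_subset hUf
  have hbad : ∑ k ∈ (cellIdx U n).filter (fun k => ¬ θ * (1 / 2 ^ n) < l k), l k ≤ ε / 2 := by
    have hone : ∀ k ∈ (cellIdx U n).filter (fun k => ¬ θ * (1 / 2 ^ n) < l k),
        (1 - θ) * l k ≤ volume.real ((U \ E) ∩ cell n k) := by
      intro k hk
      obtain ⟨hk1, hk2⟩ := Finset.mem_filter.mp hk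
      have hkU : cell n k ⊆ U := (Finset.mem_filter.mp hk1).2
      have e1 : (U \ E) ∩ cell n k = cell n k \ A k := by
        ext y; simp only [hA, mem_inter_iff, Set.mem_sdiff]
        constructor
        · rintro ⟨⟨_, b⟩, d⟩; exact ⟨d, fun h => b h.1⟩
        · rintro ⟨d, b⟩; exact ⟨⟨hkU d, fun h => b ⟨h, d⟩⟩, d⟩
      rw [e1, measureReal_sdiff inter_subset_right (hAm k) (bounded_measure_ne_top (bounded_cell n k)),
        volReal_cell]
      change _ ≤ _ - l k
      have hlk : 0 ≤ l k := measureReal_nonneg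
      push Not at hk2
      have hp : 0 < 1 / (2:ℝ) ^ n := by positivity
      nlinarith [mul_nonneg (show 0 ≤ 2 - θ by linarith) (sub_nonneg.mpr hk2),
        mul_nonneg (sq_nonneg (1 - θ)) hp.le]
    have hsum := Finset.sum_le_sum hone
    rw [← Finset.mul_sum] at hsum
    have : ∑ k ∈ (cellIdx U n).filter (fun k => ¬ θ * (1 / 2 ^ n) < l k),
        volume.real ((U \ E) ∩ cell n k) ≤ volume.real (U \ E) := by
      rw [← measureReal_biUnion_finset (fun i hi j hj hij =>
          (disjoint_cell n univ (mem_univ i) (mem_univ j) hij).mono inter_subset_right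
            inter_subset_right)
        (fun k _ => (hU.measurableSet.diff hm).inter (measurableSet_cell n k))
        (fun k _ => measure_ne_top_of_subset inter_subset_left hUEf)]
      exact measureReal_mono (iUnion₂_subset fun k _ => inter_subset_left) hUEf
    have t3 := sub_pos.mpr t2
    have : (1 - θ) * (∑ k ∈ (cellIdx U n).filter (fun k => ¬ θ * (1 / 2 ^ n) < l k), l k) ≤
      (1 - θ) * (ε / 2) := by linarith
    exact le_of_mul_le_mul_left this t3
  have htot : volume.real E ≤ ∑ k ∈ cellIdx U n, l k + volume.real (U \ dyadic U n) := by
    have : E ⊆ (⋃ k ∈ cellIdx U n, A k) ∪ (U \ dyadic U n) := by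
      intro y hy
      by_cases h : y ∈ dyadic U n
      · left
        simp only [dyadic, mem_iUnion] at h ⊢
        obtain ⟨k, hk, h⟩ := h
        exact ⟨k, hk, hy, h⟩
      · exact Or.inr ⟨hEU hy, h⟩
    refine (measureReal_mono this ?_).trans ((measureReal_union_le _ _).trans ?_)
    · refine measure_ne_top_of_subset (s := U) ?_ hUf
      exact union_subset (iUnion₂_subset fun k _ => inter_subset_left.trans hEU) sdiff_subset
    · rw [measureReal_biUnion_finset (hdis _) (fun k _ => hAm k)
        (fun k _ => bounded_measure_ne_top (hAb k))]
  rw [← Finset.sum_filter_add_sum_filter_not (cellIdx U n) (fun k => θ * (1 / 2 ^ n) < l k)] at htot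
  have : e ≤ ε / 2 := by rw [hedef]; nlinarith
  linarith

lemma volume_Fl {lam : ℝ} (h0 : 0 ≤ lam) (h1 : lam ≤ 1) {E : Set ℝ} (hm : MeasurableSet E)
    (hf : volume E ≠ ⊤) : volume (Fl lam E) = volume E := by
  rcases h1.eq_or_lt with rfl | h1
  · rw [Fl_one]
  rw [Fl_of_lt h1]
  have hle := volume_slide_le h0 h1 E
  refine le_antisymm hle ?_
  exact (ENNReal.toReal_le_toReal hf (ne_top_of_le_ne_top hf hle)).mp (le_volReal_slide h0 h1 hm hf)

/-- Contractivity from monotonicity and measure preservation, by comparison with the image of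
`E ∩ F`, which lies in both images. -/
lemma volume_Fl_sdiff_le {lam : ℝ} (h0 : 0 ≤ lam) (h1 : lam ≤ 1) {E F : Set ℝ}
    (hE : MeasurableSet E) (hF : MeasurableSet F) (hEf : volume E ≠ ⊤) :
    volume (Fl lam E \ Fl lam F) ≤ volume (E \ F) := by
  have hI : MeasurableSet (E ∩ F) := hE.inter hF
  have hIf : volume (E ∩ F) ≠ ⊤ := measure_ne_top_of_subset inter_subset_left hEf
  have m1 : volume (Fl lam (E ∩ F) \ Fl lam F) = 0 :=
    Fl_mono (by simp [sdiff_eq_empty.mpr (inter_subset_right : E ∩ F ⊆ F)])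
  have m2 : volume (Fl lam (E ∩ F) \ Fl lam E) = 0 :=
    Fl_mono (by simp [sdiff_eq_empty.mpr (inter_subset_left : E ∩ F ⊆ E)])
  have hsub : Fl lam E \ Fl lam F ⊆
      (Fl lam E \ Fl lam (E ∩ F)) ∪ (Fl lam (E ∩ F) \ Fl lam F) := by
    rintro x ⟨a, b⟩
    by_cases h : x ∈ Fl lam (E ∩ F)
    · exact Or.inr ⟨h, b⟩
    · exact Or.inl ⟨a, h⟩
  calc volume (Fl lam E \ Fl lam F) ≤ volume (Fl lam E \ Fl lam (E ∩ F)) + 0 := by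
        rw [← m1]; exact (measure_mono hsub).trans (measure_union_le _ _)
    _ = volume (Fl lam E) - volume (Fl lam (E ∩ F)) := by
        have hae : (Fl lam E ∩ Fl lam (E ∩ F) : Set ℝ) =ᵐ[volume] Fl lam (E ∩ F) := by
          apply (inter_subset_right.eventuallyLE).antisymm
          apply ae_le_set.mpr
          refine measure_mono_null ?_ m2
          rintro x ⟨a, b⟩
          exact ⟨a, fun h => b ⟨h, a⟩⟩
        rw [add_zero, ← measure_congr hae, ← sdiff_inter_self_eq_sdiff, inter_comm,
          measure_sdiff inter_subset_left
          ((measurableSet_Fl hE).inter (measurableSet_Fl hI)).nullMeasurableSet]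
        refine measure_ne_top_of_subset inter_subset_left ?_
        rw [volume_Fl h0 h1 hE hEf]; exact hEf
    _ = volume E - volume (E ∩ F) := by rw [volume_Fl h0 h1 hE hEf, volume_Fl h0 h1 hI hIf]
    _ = volume (E \ F) := by
        rw [← measure_sdiff inter_subset_left hI.nullMeasurableSet hIf, sdiff_self_inter]

lemma volume_Fl_symmDiff_le {lam : ℝ} (h0 : 0 ≤ lam) (h1 : lam ≤ 1) {E F : Set ℝ}
    (hE : MeasurableSet E) (hF : MeasurableSet F) (hEf : volume E ≠ ⊤) (hFf : volume F ≠ ⊤) :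
    volume (symmDiff (Fl lam E) (Fl lam F)) ≤ volume (symmDiff E F) := by
  rw [measure_symmDiff_eq (measurableSet_Fl hE).nullMeasurableSet
    (measurableSet_Fl hF).nullMeasurableSet,
    measure_symmDiff_eq hE.nullMeasurableSet hF.nullMeasurableSet]
  exact add_le_add (volume_Fl_sdiff_le h0 h1 hE hF hEf) (volume_Fl_sdiff_le h0 h1 hF hE hFf)

lemma symmDiff_ne_top {A B : Set ℝ} (hA : volume A ≠ ⊤) (hB : volume B ≠ ⊤) :
    volume (symmDiff A B) ≠ ⊤ :=
  measure_ne_top_of_subset symmDiff_subset_union (measure_union_ne_top hA hB)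

lemma volReal_Fl_symmDiff_le {lam : ℝ} (h0 : 0 ≤ lam) (h1 : lam ≤ 1) {E F : Set ℝ}
    (hE : MeasurableSet E) (hF : MeasurableSet F) (hEf : volume E ≠ ⊤) (hFf : volume F ≠ ⊤) :
    volume.real (symmDiff (Fl lam E) (Fl lam F)) ≤ volume.real (symmDiff E F) :=
  ENNReal.toReal_mono (symmDiff_ne_top hEf hFf) (volume_Fl_symmDiff_le h0 h1 hE hF hEf hFf)

lemma exists_finU_approx {E : Set ℝ} (hm : MeasurableSet E) (hf : volume E ≠ ⊤) {e : ℝ}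
    (he : 0 < e) : ∃ n F, FinU n F ∧ MeasurableSet F ∧ volume.real (symmDiff E F) < e := by
  obtain ⟨U, hU, hEU, hUf, hUE, n, hn⟩ := exists_dyadic hm hf (half_pos he)
  refine ⟨_, dyadic U n, finU_dyadic U n, measurableSet_dyadic U n, ?_⟩
  have h1 : symmDiff E (dyadic U n) ⊆ (U \ E) ∪ (U \ dyadic U n) := by
    rintro y (⟨a, b⟩ | ⟨a, b⟩)
    · exact Or.inr ⟨hEU a, b⟩
    · exact Or.inl ⟨dyadic_subset U n a, b⟩
  have := (measureReal_mono h1 (measure_ne_top_of_subset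
    (union_subset sdiff_subset sdiff_subset) hUf)).trans (measureReal_union_le _ _)
  linarith

/-! ### Continuity, semigroup law, endpoint and smoothing -/

lemma Fl_ne_top {lam : ℝ} (h0 : 0 ≤ lam) (h1 : lam ≤ 1) {E : Set ℝ} (hm : MeasurableSet E)
    (hf : volume E ≠ ⊤) : volume (Fl lam E) ≠ ⊤ := by rw [volume_Fl h0 h1 hm hf]; exact hf

lemma Fl_unif_cont {E : Set ℝ} (hm : MeasurableSet E) (hf : volume E ≠ ⊤) {e : ℝ} (he : 0 < e) :
    ∃ δ > 0, ∀ lam mu : ℝ, 0 ≤ lam → lam ≤ 1 → 0 ≤ mu → mu ≤ 1 → |lam - mu| < δ →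
      volume.real (symmDiff (Fl lam E) (Fl mu E)) < e := by
  obtain ⟨n, F, hF, hFm, hd⟩ := exists_finU_approx hm hf (show 0 < e / 3 by positivity)
  obtain ⟨K, k0, hK⟩ := (goodFlow n F hF).lip
  refine ⟨e / (3 * (K + 1)), by positivity, fun lam mu a b a' b' h => ?_⟩
  have q1 := volReal_symmDiff_triangle (Fl_ne_top a b hm hf) (Fl_ne_top a b hFm hF.ne_top)
    (Fl_ne_top a' b' hm hf)
  have q2 := volReal_symmDiff_triangle (Fl_ne_top a b hFm hF.ne_top)
    (Fl_ne_top a' b' hFm hF.ne_top) (Fl_ne_top a' b' hm hf)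
  have q3 := volReal_Fl_symmDiff_le a b hm hFm hf hF.ne_top
  have q4 := volReal_Fl_symmDiff_le a' b' hm hFm hf hF.ne_top
  rw [symmDiff_comm (Fl mu E)] at q4
  have q5 := hK lam mu a b a' b'
  rw [lt_div_iff₀ (by positivity)] at h
  nlinarith [abs_nonneg (lam - mu)]

/-- By contractivity it suffices to have the semigroup law on the dense class of finite unions of
intervals. -/
lemma Fl_semigroup {E : Set ℝ} (hm : MeasurableSet E) (hf : volume E ≠ ⊤) {lam mu : ℝ}
    (a : 0 ≤ lam) (b : lam ≤ 1) (a' : 0 ≤ mu) (b' : mu ≤ 1) :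
    volume (symmDiff (Fl (mu * lam) E) (Fl mu (Fl lam E))) = 0 := by
  have a2 : 0 ≤ mu * lam := mul_nonneg a' a
  have b2 : mu * lam ≤ 1 := mul_le_one₀ b' a b
  have hfl := Fl_ne_top a b hm hf
  have hml := measurableSet_Fl (lam := lam) hm
  have hne : volume (symmDiff (Fl (mu * lam) E) (Fl mu (Fl lam E))) ≠ ⊤ :=
    symmDiff_ne_top (Fl_ne_top a2 b2 hm hf) (Fl_ne_top a' b' hml hfl)
  have : volume.real (symmDiff (Fl (mu * lam) E) (Fl mu (Fl lam E))) ≤ 0 := by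
    refine le_of_forall_pos_le_add fun e he => ?_
    obtain ⟨n, F, hF, hFm, hd⟩ := exists_finU_approx hm hf (half_pos he)
    have hFf := hF.ne_top
    have q1 := volReal_symmDiff_triangle (Fl_ne_top a2 b2 hm hf) (Fl_ne_top a2 b2 hFm hFf)
      (Fl_ne_top a' b' hml hfl)
    have q2 := volReal_Fl_symmDiff_le a2 b2 hm hFm hf hFf
    have q3 := (volReal_Fl_symmDiff_le a' b' (measurableSet_Fl hFm) hml
      (Fl_ne_top a b hFm hFf) hfl).trans (volReal_Fl_symmDiff_le a b hFm hm hFf hf)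
    rw [symmDiff_comm F] at q3
    rw [measureReal_congr (symmDiff_congr_ae ((goodFlow n F hF).semi lam mu a b a' b')
      (Filter.EventuallyEq.refl _ (Fl mu (Fl lam E))))] at q1
    linarith
  have h0 : volume.real (symmDiff (Fl (mu * lam) E) (Fl mu (Fl lam E))) = 0 :=
    le_antisymm this measureReal_nonneg
  exact (measureReal_eq_zero_iff hne).mp h0

/-- At `lam = 0` the moment term vanishes, and a cut at `±∞` makes `p` a gap once
`|p|` exceeds half of the measure of `E`. -/
lemma mem_gapSet_zero {E : Set ℝ} (hf : volume E ≠ ⊤) {p : ℝ} (hp : volume.real E / 2 < |p|) :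
    p ∈ gapSet 0 E := by
  have hS : ∀ S ⊆ E, 0 ≤ volume.real S ∧ volume.real S ≤ volume.real E := fun S hS =>
    ⟨measureReal_nonneg, measureReal_mono hS hf⟩
  rcases lt_abs.mp hp with h | h
  · refine ⟨⊤, fun S hSE _ _ hx => ?_, LC_iff.mpr fun S hSE _ _ _ => ?_⟩
    · have : S = ∅ := eq_empty_of_forall_notMem fun y hy => not_top_lt (hx y hy)
      subst this; simp
    · have := hS S hSE
      nlinarith
  · refine ⟨⊥, fun S hSE _ _ _ => ?_, LC_iff.mpr fun S hSE _ _ hx => ?_⟩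
    · have := hS S hSE
      nlinarith
    · have : S = ∅ := eq_empty_of_forall_notMem fun y hy => not_lt_bot (hx y hy)
      subst this; simp

lemma Fl_zero {E : Set ℝ} (hm : MeasurableSet E) (hf : volume E ≠ ⊤) :
    volume (symmDiff (Fl 0 E) (Icc (-(volume E).toReal / 2) ((volume E).toReal / 2))) = 0 := by
  have hsub : Fl 0 E ⊆ Icc (-(volume E).toReal / 2) ((volume E).toReal / 2) := by
    rw [Fl_of_lt zero_lt_one]
    intro p hp
    by_contra hn
    apply hp
    apply mem_gapSet_zero hf
    by_contra hle
    push Not at hle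
    obtain ⟨h1, h2⟩ := abs_le.mp hle
    exact hn ⟨by rw [neg_div]; exact h1, h2⟩
  have hv := volume_Fl le_rfl zero_le_one hm hf
  have he : volume (Icc (-(volume E).toReal / 2) ((volume E).toReal / 2)) = volume E := by
    rw [Real.volume_Icc, show (volume E).toReal / 2 - -(volume E).toReal / 2 = (volume E).toReal by
      ring, ENNReal.ofReal_toReal hf]
  have := ae_eq_of_subset_of_measure_ge hsub (by rw [hv, he])
    (measurableSet_Fl hm).nullMeasurableSet (by rw [he]; exact hf)
  exact measure_symmDiff_eq_zero_iff.mpr this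

lemma isOpen_eq_iUnion_Icc {U : Set ℝ} (hU : IsOpen U) :
    ∃ I : ℕ → Set ℝ, (∀ n, ∃ a b : ℝ, I n = Icc a b) ∧ ⋃ n, I n = U := by
  classical
  obtain ⟨f, hf⟩ := exists_surjective_nat (ℚ × ℚ)
  have hemp : (∅ : Set ℝ) = Icc 1 0 := by simp
  refine ⟨fun n => if Icc ((f n).1 : ℝ) (f n).2 ⊆ U then Icc ((f n).1 : ℝ) (f n).2 else ∅, ?_, ?_⟩
  · intro n
    dsimp only
    split_ifs
    · exact ⟨_, _, rfl⟩
    · exact ⟨1, 0, hemp⟩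
  · apply Subset.antisymm
    · refine iUnion_subset fun n => ?_
      split_ifs with h
      · exact h
      · exact empty_subset _
    · intro x hx
      obtain ⟨e, he, hball⟩ := Metric.isOpen_iff.mp hU x hx
      obtain ⟨q, q1, q2⟩ := exists_rat_btwn (sub_lt_self x he)
      obtain ⟨r, r1, r2⟩ := exists_rat_btwn (lt_add_of_pos_right x he)
      obtain ⟨n, hn⟩ := hf (q, r)
      have hs : Icc (q:ℝ) r ⊆ U := fun y hy => hball (by
        rw [Metric.mem_ball, Real.dist_eq, abs_lt]
        constructor <;> linarith [hy.1, hy.2])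
      refine mem_iUnion.mpr ⟨n, ?_⟩
      rw [hn, if_pos hs]
      exact ⟨q2.le, r1.le⟩

/-! ### The trilinear form -/

lemma ind1_nonneg (A : Set ℝ) (x : ℝ) : 0 ≤ ind1 A x :=
  indicator_nonneg (fun _ _ => zero_le_one) x

lemma ind1_le_one (A : Set ℝ) (x : ℝ) : ind1 A x ≤ 1 :=
  indicator_le_self' (fun _ _ => zero_le_one) x

lemma measurable_ind1 {A : Set ℝ} (h : MeasurableSet A) : Measurable (ind1 A) :=
  measurable_one.indicator h

lemma integrable_ind1 {A : Set ℝ} (h : MeasurableSet A) (hf : volume A ≠ ⊤) :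
    Integrable (ind1 A) :=
  (integrable_indicator_iff h).mpr (integrableOn_const (C := (1:ℝ)) hf)

lemma integral_ind1 {A : Set ℝ} (h : MeasurableSet A) : ∫ x, ind1 A x = volume.real A :=
  integral_indicator_one h

lemma integrable_T {A B C : Set ℝ} (hA : MeasurableSet A) (hB : MeasurableSet B)
    (hC : MeasurableSet C) (hAf : volume A ≠ ⊤) (hBf : volume B ≠ ⊤) :
    Integrable fun p : ℝ × ℝ => ind1 A p.1 * ind1 B p.2 * ind1 C (-p.1 - p.2) := by
  have h := (integrable_ind1 hA hAf).mul_prod (integrable_ind1 hB hBf)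
  refine h.mono ?_ (Eventually.of_forall fun p => ?_)
  · have := measurable_ind1 hA
    have := measurable_ind1 hB
    have := measurable_ind1 hC
    fun_prop
  · have a := ind1_nonneg A p.1
    have b := ind1_nonneg B p.2
    have c := ind1_nonneg C (-p.1 - p.2)
    rw [Real.norm_of_nonneg (by positivity), Real.norm_of_nonneg (by positivity)]
    exact mul_le_of_le_one_right (by positivity) (ind1_le_one _ _)

lemma T1_swap12 (A B C : Set ℝ) : T1 A B C = T1 B A C := by
  have hs := integral_prod_swap (μ := (volume : Measure ℝ)) (ν := (volume : Measure ℝ))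
    fun p : ℝ × ℝ => ind1 A p.1 * ind1 B p.2 * ind1 C (-p.1 - p.2)
  refine hs.symm.trans ?_
  refine integral_congr_ae (Eventually.of_forall fun p => ?_)
  simp only [Prod.fst_swap, Prod.snd_swap]
  rw [mul_comm (ind1 A _), show -p.2 - p.1 = -p.1 - p.2 by ring]

lemma T1_iter {A B C : Set ℝ} (hA : MeasurableSet A) (hB : MeasurableSet B)
    (hC : MeasurableSet C) (hAf : volume A ≠ ⊤) (hBf : volume B ≠ ⊤) :
    T1 A B C = ∫ x, ∫ y, ind1 A x * ind1 B y * ind1 C (-x - y) :=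
  integral_prod _ (integrable_T hA hB hC hAf hBf)

lemma T1_swap23 {A B C : Set ℝ} (hA : MeasurableSet A) (hB : MeasurableSet B)
    (hC : MeasurableSet C) (hAf : volume A ≠ ⊤) (hBf : volume B ≠ ⊤) (hCf : volume C ≠ ⊤) :
    T1 A B C = T1 A C B := by
  rw [T1_iter hA hB hC hAf hBf, T1_iter hA hC hB hAf hCf]
  congr 1
  ext x
  rw [← integral_sub_left_eq_self _ volume (-x)]
  congr 1
  ext y
  rw [show -x - (-x - y) = y by ring]; ring

/-- Dependence of `T1` on its first argument, with `C` estimated by the whole line. -/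
lemma T1_slot {A A' B C : Set ℝ} (hA : MeasurableSet A) (hA' : MeasurableSet A')
    (hB : MeasurableSet B) (hC : MeasurableSet C) (hAf : volume A ≠ ⊤) (hAf' : volume A' ≠ ⊤)
    (hBf : volume B ≠ ⊤) :
    T1 A B C ≤ T1 A' B C + volume.real (A \ A') * volume.real B := by
  have hD := hA.diff hA'
  have hDf : volume (A \ A') ≠ ⊤ := measure_ne_top_of_subset sdiff_subset hAf
  have i1 := integrable_T hA hB hC hAf hBf
  have i2 := integrable_T hA' hB hC hAf' hBf
  have i3 := (integrable_ind1 hD hDf).mul_prod (integrable_ind1 hB hBf)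
  have e3 : ∫ p : ℝ × ℝ, ind1 (A \ A') p.1 * ind1 B p.2 =
      volume.real (A \ A') * volume.real B := by
    rw [← integral_ind1 hD, ← integral_ind1 hB]
    exact integral_prod_mul (ind1 (A \ A')) (ind1 B)
  rw [T1, T1, ← e3, ← integral_add i2 i3]
  refine integral_mono i1 (i2.add i3) fun p => ?_
  have h1 : ind1 A p.1 ≤ ind1 A' p.1 + ind1 (A \ A') p.1 := by
    by_cases a : p.1 ∈ A <;> by_cases b : p.1 ∈ A' <;> simp [ind1, a, b]
  have b := ind1_nonneg B p.2
  have c := ind1_nonneg C (-p.1 - p.2)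
  have hc1 := ind1_le_one C (-p.1 - p.2)
  have d := ind1_nonneg (A \ A') p.1
  have h2 := mul_le_mul_of_nonneg_right h1 (mul_nonneg b c)
  have h3 := mul_le_of_le_one_right (mul_nonneg d b) hc1
  linarith

/-- `T1` is Lipschitz in each set for the symmetric difference metric. -/
lemma T1_le {A A' B B' C C' : Set ℝ} (hA : MeasurableSet A) (hA' : MeasurableSet A')
    (hB : MeasurableSet B) (hB' : MeasurableSet B') (hC : MeasurableSet C)
    (hC' : MeasurableSet C') (hAf : volume A ≠ ⊤) (hAf' : volume A' ≠ ⊤)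
    (hBf : volume B ≠ ⊤) (hBf' : volume B' ≠ ⊤) (hCf : volume C ≠ ⊤) (hCf' : volume C' ≠ ⊤)
    {M : ℝ} (hM1 : volume.real A' ≤ M) (hM2 : volume.real B ≤ M) :
    T1 A B C ≤ T1 A' B' C' + M * (volume.real (symmDiff A A') + volume.real (symmDiff B B') +
      volume.real (symmDiff C C')) := by
  have h1 := T1_slot hA hA' hB hC hAf hAf' hBf
  have h2 := T1_slot (C := C) hB hB' hA' hC hBf hBf' hAf'
  have h3 := T1_slot hC hC' hA' hB' hCf hCf' hAf'
  rw [T1_swap12 B, T1_swap12 B'] at h2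
  rw [T1_swap12 C, T1_swap12 C', T1_swap23 hA' hC hB' hAf' hCf hBf',
    T1_swap23 hA' hC' hB' hAf' hCf' hBf'] at h3
  have d : ∀ {X Y : Set ℝ}, volume X ≠ ⊤ → volume Y ≠ ⊤ →
      volume.real (X \ Y) ≤ volume.real (symmDiff X Y) := fun hX hY =>
    measureReal_mono (fun x hx => Or.inl hx) (symmDiff_ne_top hX hY)
  have k1 := mul_le_mul (d hAf hAf') hM2 measureReal_nonneg measureReal_nonneg
  have k2 := mul_le_mul (d hBf hBf') hM1 measureReal_nonneg measureReal_nonneg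
  have k3 := mul_le_mul (d hCf hCf') hM1 measureReal_nonneg measureReal_nonneg
  linarith

lemma T1_congr {A A' B B' C C' : Set ℝ} (hA : MeasurableSet A) (hA' : MeasurableSet A')
    (hB : MeasurableSet B) (hB' : MeasurableSet B') (hC : MeasurableSet C)
    (hC' : MeasurableSet C') (hAf : volume A ≠ ⊤) (hBf : volume B ≠ ⊤) (hCf : volume C ≠ ⊤)
    (h1 : A =ᵐ[volume] A') (h2 : B =ᵐ[volume] B') (h3 : C =ᵐ[volume] C') :
    T1 A B C = T1 A' B' C' := by
  have hAf' : volume A' ≠ ⊤ := by rwa [← measure_congr h1]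
  have hBf' : volume B' ≠ ⊤ := by rwa [← measure_congr h2]
  have hCf' : volume C' ≠ ⊤ := by rwa [← measure_congr h3]
  have z : ∀ {X Y : Set ℝ}, X =ᵐ[volume] Y → volume.real (symmDiff X Y) = 0 := fun h => by
    rw [Measure.real, measure_symmDiff_eq_zero_iff.mpr h]; rfl
  apply le_antisymm
  · have := T1_le hA hA' hB hB' hC hC' hAf hAf' hBf hBf' hCf hCf' (le_max_left _ _)
      (le_max_right _ _)
    rw [z h1, z h2, z h3] at this
    linarith
  · have := T1_le hA' hA hB' hB hC' hC hAf' hAf hBf' hBf hCf' hCf (le_max_left _ _)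
      (le_max_right _ _)
    rw [z h1.symm, z h2.symm, z h3.symm] at this
    linarith

/-- Length of the overlap of centred intervals of lengths `l`, `m` at relative displacement `d`. -/
def overlap (l m d : ℝ) : ℝ := max 0 (min (l / 2) (m / 2 - d) - max (-(l / 2)) (-(m / 2) - d))

lemma overlap_neg (l m d : ℝ) : overlap l m (-d) = overlap l m d := by
  unfold overlap
  congr 1
  rw [show m / 2 - -d = -(-(m / 2) - d) by ring, show -(m / 2) - -d = -(m / 2 - d) by ring,
    max_neg_neg]
  have : min (l / 2) (-(-(m / 2) - d)) = - max (-(l / 2)) (-(m / 2) - d) := by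
    rw [← min_neg_neg, neg_neg]
  rw [this]; ring

lemma overlap_anti {l m d d' : ℝ} (h : |d| ≤ |d'|) :
    overlap l m d' ≤ overlap l m d := by
  have key : ∀ a b : ℝ, 0 ≤ a → a ≤ b → overlap l m b ≤ overlap l m a := by
    intro a b ha hab
    unfold overlap
    rcases le_total (l / 2) (m / 2 - b) with h1 | h1 <;>
    rcases le_total (-(l / 2)) (-(m / 2) - b) with h2 | h2 <;>
    rcases le_total (l / 2) (m / 2 - a) with h3 | h3 <;>
    rcases le_total (-(l / 2)) (-(m / 2) - a) with h4 | h4 <;>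
    simp only [h1, h2, h3, h4, min_eq_left, min_eq_right, max_eq_left, max_eq_right] <;>
    apply max_le_max le_rfl <;> linarith
  have habs : ∀ a, overlap l m |a| = overlap l m a := fun a => by
    rcases abs_choice a with h | h <;> rw [h]
    exact overlap_neg l m a
  rw [← habs d, ← habs d']
  exact key _ _ (abs_nonneg d) h

lemma continuous_overlap (l m : ℝ) : Continuous (overlap l m) := by
  unfold overlap; fun_prop

/-- The overlap is even and decreasing in `|u|`, so its integral over a window of fixed length
decreases as the centre of the window moves away from the origin. -/
lemma window_anti {l m r s s' : ℝ} (hr : 0 ≤ r) (h : |s| ≤ |s'|) :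
    ∫ u in (s' - r)..(s' + r), overlap l m u ≤ ∫ u in (s - r)..(s + r), overlap l m u := by
  have hIntg : ∀ a b, IntervalIntegrable (overlap l m) volume a b := fun a b =>
    (continuous_overlap l m).intervalIntegrable a b
  have key : ∀ a b : ℝ, 0 ≤ a → a ≤ b → ∫ u in (b - r)..(b + r), overlap l m u ≤
      ∫ u in (a - r)..(a + r), overlap l m u := by
    intro a b ha hab
    have e1 := intervalIntegral.integral_add_adjacent_intervals (hIntg (a - r) (b - r))
      (hIntg (b - r) (b + r))
    have e2 := intervalIntegral.integral_add_adjacent_intervals (hIntg (a - r) (a + r))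
      (hIntg (a + r) (b + r))
    have e3 : ∫ u in (a + r)..(b + r), overlap l m u ≤ ∫ u in (a - r)..(b - r), overlap l m u := by
      rw [← intervalIntegral.integral_comp_add_right (overlap l m) r,
        ← intervalIntegral.integral_comp_sub_right (overlap l m) r]
      have hc := continuous_overlap l m
      refine intervalIntegral.integral_mono_on hab
        ((by fun_prop : Continuous _).intervalIntegrable _ _)
        ((by fun_prop : Continuous _).intervalIntegrable _ _) fun u hu => ?_
      apply overlap_anti
      rw [abs_of_nonneg (show 0 ≤ u + r by linarith [hu.1]), abs_le]
      constructor <;> linarith [hu.1]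
    linarith
  have habs : ∀ a, ∫ u in (|a| - r)..(|a| + r), overlap l m u =
      ∫ u in (a - r)..(a + r), overlap l m u := fun a => by
    rcases abs_choice a with h | h <;> rw [h]
    have hneg := intervalIntegral.integral_comp_neg (a := a - r) (b := a + r) (overlap l m)
    simp only [overlap_neg] at hneg
    rw [hneg]
    congr 1 <;> ring
  rw [← habs s, ← habs s']
  exact key _ _ (abs_nonneg s) h

/-- For three intervals `T1` depends on the centres only through their sum. -/
lemma T1_piece {a b c : ℝ} {l m n : ℝ} (hn : 0 ≤ n) :
    T1 (Ioo (a - l / 2) (a + l / 2)) (Ioo (b - m / 2) (b + m / 2)) (Ioo (c - n / 2) (c + n / 2)) =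
      ∫ u in (a + b + c - n / 2)..(a + b + c + n / 2), overlap l m u := by
  rw [T1_swap23 measurableSet_Ioo measurableSet_Ioo measurableSet_Ioo (by simp) (by simp) (by simp),
    T1_swap12, T1_iter measurableSet_Ioo measurableSet_Ioo measurableSet_Ioo (by simp) (by simp)]
  have hin : ∀ u : ℝ, ∫ x, ind1 (Ioo (c - n / 2) (c + n / 2)) u *
      ind1 (Ioo (a - l / 2) (a + l / 2)) x * ind1 (Ioo (b - m / 2) (b + m / 2)) (-u - x) =
      (Ioo (c - n / 2) (c + n / 2)).indicator (fun u => overlap l m (u + (a + b))) u := by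
    intro u
    have e1 : ∀ x, ind1 (Ioo (c - n / 2) (c + n / 2)) u *
      ind1 (Ioo (a - l / 2) (a + l / 2)) x * ind1 (Ioo (b - m / 2) (b + m / 2)) (-u - x) =
      ind1 (Ioo (c - n / 2) (c + n / 2)) u *
      ind1 (Ioo (max (a - l / 2) (-u - b - m / 2)) (min (a + l / 2) (-u - b + m / 2))) x := by
      intro x
      rw [mul_assoc]
      congr 1
      have : x ∈ Ioo (max (a - l / 2) (-u - b - m / 2)) (min (a + l / 2) (-u - b + m / 2)) ↔
          x ∈ Ioo (a - l / 2) (a + l / 2) ∧ -u - x ∈ Ioo (b - m / 2) (b + m / 2) := by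
        simp only [mem_Ioo, max_lt_iff, lt_min_iff]
        constructor
        · rintro ⟨⟨h1, h2⟩, h3, h4⟩
          exact ⟨⟨h1, h3⟩, by linarith, by linarith⟩
        · rintro ⟨⟨h1, h2⟩, h3, h4⟩
          exact ⟨⟨h1, by linarith⟩, h2, by linarith⟩
      by_cases h1 : x ∈ Ioo (a - l / 2) (a + l / 2) <;>
      by_cases h2 : -u - x ∈ Ioo (b - m / 2) (b + m / 2) <;>
      simp only [ind1, indicator, h1, h2, this] <;> simp
    simp only [e1]
    rw [integral_const_mul, integral_ind1 measurableSet_Ioo, Measure.real, Real.volume_Ioo,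
      ENNReal.toReal_ofReal', max_comm]
    have e2 : max 0 (min (a + l / 2) (-u - b + m / 2) - max (a - l / 2) (-u - b - m / 2)) =
        overlap l m (u + (a + b)) := by
      unfold overlap
      rw [show a + l / 2 = l / 2 + a by ring,
        show -u - b + m / 2 = m / 2 - (u + (a + b)) + a by ring, min_add_add_right,
        show a - l / 2 = -(l / 2) + a by ring,
        show -u - b - m / 2 = -(m / 2) - (u + (a + b)) + a by ring, max_add_add_right]
      congr 1; ring
    rw [e2]
    by_cases h : u ∈ Ioo (c - n / 2) (c + n / 2) <;> simp [ind1, indicator, h]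
  simp only [hin]
  rw [integral_indicator measurableSet_Ioo, ← integral_Ioc_eq_integral_Ioo,
    ← intervalIntegral.integral_of_le (by linarith),
    intervalIntegral.integral_comp_add_right (overlap l m) (a + b)]
  congr 1 <;> ring

lemma ind1_cfg {s : Finset ℤ} {c l : ℤ → ℝ} (hv : Valid s c l) (x : ℝ) :
    ind1 (cfg s c l) x = ∑ j ∈ s, ind1 (piece c l j) x := by
  rw [ind1, cfg, Finset.indicator_biUnion_apply s (piece c l) hv.disj]
  rfl

lemma T1_cfg {s t r : Finset ℤ} {c1 l1 c2 l2 c3 l3 : ℤ → ℝ} (h1 : Valid s c1 l1)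
    (h2 : Valid t c2 l2) (h3 : Valid r c3 l3) :
    T1 (cfg s c1 l1) (cfg t c2 l2) (cfg r c3 l3) =
      ∑ i ∈ s, ∑ j ∈ t, ∑ k ∈ r, T1 (piece c1 l1 i) (piece c2 l2 j) (piece c3 l3 k) := by
  have hIntg : ∀ i j k, Integrable fun p : ℝ × ℝ => ind1 (piece c1 l1 i) p.1 *
      ind1 (piece c2 l2 j) p.2 * ind1 (piece c3 l3 k) (-p.1 - p.2) := fun i j k =>
    integrable_T (measurableSet_piece _ _ _) (measurableSet_piece _ _ _)
      (measurableSet_piece _ _ _) (bounded_measure_ne_top (bounded_piece _ _ _))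
      (bounded_measure_ne_top (bounded_piece _ _ _))
  simp only [T1]
  rw [show (fun p : ℝ × ℝ => ind1 (cfg s c1 l1) p.1 * ind1 (cfg t c2 l2) p.2 *
      ind1 (cfg r c3 l3) (-p.1 - p.2)) = fun p => ∑ i ∈ s, ∑ j ∈ t, ∑ k ∈ r,
      ind1 (piece c1 l1 i) p.1 * ind1 (piece c2 l2 j) p.2 *
      ind1 (piece c3 l3 k) (-p.1 - p.2) by
    ext p
    rw [ind1_cfg h1, ind1_cfg h2, ind1_cfg h3, Finset.sum_mul_sum, Finset.sum_mul]
    simp only [Finset.sum_mul_sum]]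
  rw [integral_finsetSum _ fun i _ => integrable_finsetSum _ fun j _ =>
    integrable_finsetSum _ fun k _ => hIntg i j k]
  refine Finset.sum_congr rfl fun i _ => ?_
  rw [integral_finsetSum _ fun j _ => integrable_finsetSum _ fun k _ => hIntg i j k]
  refine Finset.sum_congr rfl fun j _ => ?_
  rw [integral_finsetSum _ fun k _ => hIntg i j k]

/-- Contracting the centres of the intervals does not decrease `T1`. -/
lemma T1_cfg_anti {s t r : Finset ℤ} {c1 l1 c2 l2 c3 l3 : ℤ → ℝ} {lam mu : ℝ} (h0 : 0 ≤ lam)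
    (hlm : lam ≤ mu) (h1 : Valid s (fun j => lam * c1 j) l1)
    (h2 : Valid t (fun j => lam * c2 j) l2) (h3 : Valid r (fun j => lam * c3 j) l3) :
    T1 (cfg s (fun j => mu * c1 j) l1) (cfg t (fun j => mu * c2 j) l2)
      (cfg r (fun j => mu * c3 j) l3) ≤
    T1 (cfg s (fun j => lam * c1 j) l1) (cfg t (fun j => lam * c2 j) l2)
      (cfg r (fun j => lam * c3 j) l3) := by
  rw [T1_cfg h1 h2 h3, T1_cfg (h1.scale_mono h0 hlm) (h2.scale_mono h0 hlm) (h3.scale_mono h0 hlm)]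
  refine Finset.sum_le_sum fun i _ => Finset.sum_le_sum fun j _ => Finset.sum_le_sum fun k hk => ?_
  have p3 := (h3.pos k hk).le
  simp only [piece]
  rw [T1_piece p3, T1_piece p3]
  apply window_anti (by positivity)
  rw [← mul_add, ← mul_add, ← mul_add, ← mul_add, abs_mul, abs_mul, abs_of_nonneg h0,
    abs_of_nonneg (h0.trans hlm)]
  exact mul_le_mul_of_nonneg_right hlm (abs_nonneg _)

/-! ### The trilinear form along the flow -/

/-- Monotonicity for finite unions of intervals, by induction on the total number `N` of intervals:
up to the first collision all centres contract rigidly, afterwards fewer intervals remain. -/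
lemma T1_Fl_anti_finU (N : ℕ) : ∀ n1 n2 n3 : ℕ, n1 + n2 + n3 = N → ∀ E1 E2 E3 : Set ℝ,
    MeasurableSet E1 → MeasurableSet E2 → MeasurableSet E3 →
    FinU n1 E1 → FinU n2 E2 → FinU n3 E3 → ∀ lam mu : ℝ, 0 ≤ lam → lam ≤ mu → mu ≤ 1 →
    T1 (Fl mu E1) (Fl mu E2) (Fl mu E3) ≤ T1 (Fl lam E1) (Fl lam E2) (Fl lam E3) := by
  induction N using Nat.strong_induction_on with
  | _ N ih =>
  intro n1 n2 n3 hN E1 E2 E3 m1 m2 m3 f1 f2 f3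
  obtain ⟨s1, c1, d1, a1, -, hv1, hae1, a10, a11, hrig1, hor1⟩ := f1.collision
  obtain ⟨s2, c2, d2, a2, -, hv2, hae2, a20, a21, hrig2, hor2⟩ := f2.collision
  obtain ⟨s3, c3, d3, a3, -, hv3, hae3, a30, a31, hrig3, hor3⟩ := f3.collision
  have g1 := goodFlow _ _ f1
  have g2 := goodFlow _ _ f2
  have g3 := goodFlow _ _ f3
  set L := max a1 (max a2 a3) with hL
  have L1 : a1 ≤ L := le_max_left _ _
  have L2 : a2 ≤ L := (le_max_left _ _).trans (le_max_right _ _)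
  have L3 : a3 ≤ L := (le_max_right _ _).trans (le_max_right _ _)
  have L0 : 0 ≤ L := a10.trans L1
  have Lle : L ≤ 1 := max_le a11 (max_le a21 a31)
  have mF : ∀ {lam : ℝ} {E : Set ℝ}, MeasurableSet E → MeasurableSet (Fl lam E) :=
    fun h => measurableSet_Fl h
  -- before any collision all intervals move rigidly
  have early : ∀ lam mu : ℝ, L ≤ lam → lam ≤ mu → mu ≤ 1 →
      T1 (Fl mu E1) (Fl mu E2) (Fl mu E3) ≤ T1 (Fl lam E1) (Fl lam E2) (Fl lam E3) := by
    intro lam mu hl hlm hm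
    have eq : ∀ nu : ℝ, L ≤ nu → nu ≤ 1 → T1 (Fl nu E1) (Fl nu E2) (Fl nu E3) =
        T1 (cfg s1 (fun j => nu * c1 j) d1) (cfg s2 (fun j => nu * c2 j) d2)
          (cfg s3 (fun j => nu * c3 j) d3) := by
      intro nu h h'
      exact T1_congr (mF m1) (measurableSet_cfg _ _ _) (mF m2) (measurableSet_cfg _ _ _) (mF m3)
        (measurableSet_cfg _ _ _) (g1.fin nu (L0.trans h) h').ne_top
        (g2.fin nu (L0.trans h) h').ne_top (g3.fin nu (L0.trans h) h').ne_top
        (hrig1 nu (L1.trans h) h').2.1 (hrig2 nu (L2.trans h) h').2.1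
        (hrig3 nu (L3.trans h) h').2.1
    rw [eq lam hl (hlm.trans hm), eq mu (hl.trans hlm) hm]
    exact T1_cfg_anti (L0.trans hl) hlm (hrig1 lam (L1.trans hl) (hlm.trans hm)).1
      (hrig2 lam (L2.trans hl) (hlm.trans hm)).1 (hrig3 lam (L3.trans hl) (hlm.trans hm)).1
  -- after the first collision the number of intervals has dropped
  have late : ∀ lam mu : ℝ, 0 ≤ lam → lam ≤ mu → mu ≤ L →
      T1 (Fl mu E1) (Fl mu E2) (Fl mu E3) ≤ T1 (Fl lam E1) (Fl lam E2) (Fl lam E3) := by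
    intro lam mu h0 hlm hm
    rcases L0.eq_or_lt with hz | hp
    · have e1 : lam = 0 := by linarith
      have e2 : mu = 0 := by linarith
      rw [e1, e2]
    have eq : ∀ nu : ℝ, 0 ≤ nu → nu ≤ L → T1 (Fl nu E1) (Fl nu E2) (Fl nu E3) =
        T1 (Fl (nu / L) (Fl L E1)) (Fl (nu / L) (Fl L E2)) (Fl (nu / L) (Fl L E3)) := by
      intro nu h h'
      have q0 : 0 ≤ nu / L := div_nonneg h L0
      have q1 : nu / L ≤ 1 := (div_le_one hp).mpr h'
      have r1 := g1.semi L (nu / L) L0 Lle q0 q1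
      have r2 := g2.semi L (nu / L) L0 Lle q0 q1
      have r3 := g3.semi L (nu / L) L0 Lle q0 q1
      rw [div_mul_cancel₀ _ hp.ne'] at r1 r2 r3
      have h1' := h'.trans Lle
      exact T1_congr (mF m1) (mF (mF m1)) (mF m2) (mF (mF m2)) (mF m3) (mF (mF m3))
        (g1.fin nu h h1').ne_top (g2.fin nu h h1').ne_top (g3.fin nu h h1').ne_top r1 r2 r3
    have fewer : ∃ k1 k2 k3, k1 + k2 + k3 < N ∧ FinU k1 (Fl L E1) ∧ FinU k2 (Fl L E2) ∧
        FinU k3 (Fl L E3) := by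
      have F1 := g1.fin L L0 Lle
      have F2 := g2.fin L L0 Lle
      have F3 := g3.fin L L0 Lle
      have hcase : L = a1 ∨ L = a2 ∨ L = a3 := by
        rcases max_choice a1 (max a2 a3) with h | h
        · exact Or.inl h
        · rcases max_choice a2 a3 with h' | h'
          · exact Or.inr (Or.inl (h.trans h'))
          · exact Or.inr (Or.inr (h.trans h'))
      rcases hcase with h | h | h
      · rcases hor1 with h' | ⟨-, hn, hf⟩
        · exact absurd (h.trans h') hp.ne'
        · exact ⟨n1 - 1, n2, n3, by omega, by rwa [h], F2, F3⟩
      · rcases hor2 with h' | ⟨-, hn, hf⟩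
        · exact absurd (h.trans h') hp.ne'
        · exact ⟨n1, n2 - 1, n3, by omega, F1, by rwa [h], F3⟩
      · rcases hor3 with h' | ⟨-, hn, hf⟩
        · exact absurd (h.trans h') hp.ne'
        · exact ⟨n1, n2, n3 - 1, by omega, F1, F2, by rwa [h]⟩
    obtain ⟨k1, k2, k3, hk, F1, F2, F3⟩ := fewer
    rw [eq lam h0 (hlm.trans hm), eq mu (h0.trans hlm) hm]
    exact ih _ hk k1 k2 k3 rfl _ _ _ (mF m1) (mF m2) (mF m3) F1 F2 F3 _ _ (div_nonneg h0 L0)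
      (div_le_div_of_nonneg_right hlm L0) ((div_le_one hp).mpr hm)
  intro lam mu h0 hlm hm
  rcases le_total L lam with h | h
  · exact early lam mu h hlm hm
  rcases le_total mu L with h' | h'
  · exact late lam mu h0 hlm h'
  exact (early L mu le_rfl h' hm).trans (late lam L h0 h le_rfl)

lemma T1_Fl_anti {E1 E2 E3 : Set ℝ} (m1 : MeasurableSet E1) (m2 : MeasurableSet E2)
    (m3 : MeasurableSet E3) (f1 : volume E1 ≠ ⊤) (f2 : volume E2 ≠ ⊤) (f3 : volume E3 ≠ ⊤)
    {lam mu : ℝ} (h0 : 0 ≤ lam) (hlm : lam ≤ mu) (h1 : mu ≤ 1) :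
    T1 (Fl mu E1) (Fl mu E2) (Fl mu E3) ≤ T1 (Fl lam E1) (Fl lam E2) (Fl lam E3) := by
  refine le_of_forall_pos_le_add fun ε hε => ?_
  set M := max (volume.real E1) (volume.real E2) + 1 with hM
  have hM1 : volume.real E1 + 1 ≤ M := by linarith [le_max_left (volume.real E1) (volume.real E2)]
  have hM2 : volume.real E2 + 1 ≤ M := by linarith [le_max_right (volume.real E1) (volume.real E2)]
  have hM0 : 0 < M := by linarith [measureReal_nonneg (μ := volume) (s := E1)]
  set e := min 1 (ε / (6 * M)) with he
  have e0 : 0 < e := lt_min one_pos (by positivity)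
  have e1 : e ≤ 1 := min_le_left _ _
  have e2 : M * (6 * e) ≤ ε := by
    have : e ≤ ε / (6 * M) := min_le_right _ _
    rw [le_div_iff₀ (by positivity)] at this
    linarith
  obtain ⟨n1, F1, g1, k1, d1⟩ := exists_finU_approx m1 f1 e0
  obtain ⟨n2, F2, g2, k2, d2⟩ := exists_finU_approx m2 f2 e0
  obtain ⟨n3, F3, g3, k3, d3⟩ := exists_finU_approx m3 f3 e0
  have hlam1 := hlm.trans h1
  have hmu0 := h0.trans hlm
  have vr : ∀ {nu : ℝ} {E : Set ℝ}, 0 ≤ nu → nu ≤ 1 → MeasurableSet E → volume E ≠ ⊤ →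
      volume.real (Fl nu E) = volume.real E := fun a b c d => by
    rw [Measure.real, Measure.real, volume_Fl a b c d]
  have vF : ∀ {E F : Set ℝ}, volume E ≠ ⊤ → volume F ≠ ⊤ → volume.real (symmDiff E F) < e →
      volume.real F ≤ volume.real E + 1 := by
    intro E F hE hF hd
    have hsub : F ⊆ E ∪ symmDiff E F := by
      intro x hx
      by_cases h : x ∈ E
      · exact Or.inl h
      · exact Or.inr (Or.inr ⟨hx, h⟩)
    have := (measureReal_mono hsub (measure_union_ne_top hE (symmDiff_ne_top hE hF))).trans
      (measureReal_union_le _ _)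
    linarith
  have b1 := T1_le (M := M) (measurableSet_Fl (lam := mu) m1) (measurableSet_Fl (lam := mu) k1)
    (measurableSet_Fl (lam := mu) m2) (measurableSet_Fl (lam := mu) k2)
    (measurableSet_Fl (lam := mu) m3) (measurableSet_Fl (lam := mu) k3)
    (Fl_ne_top hmu0 h1 m1 f1) (Fl_ne_top hmu0 h1 k1 g1.ne_top)
    (Fl_ne_top hmu0 h1 m2 f2) (Fl_ne_top hmu0 h1 k2 g2.ne_top)
    (Fl_ne_top hmu0 h1 m3 f3) (Fl_ne_top hmu0 h1 k3 g3.ne_top)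
    (by rw [vr hmu0 h1 k1 g1.ne_top]; exact (vF f1 g1.ne_top d1).trans hM1)
    (by rw [vr hmu0 h1 m2 f2]; linarith)
  have b2 := T1_le (M := M) (measurableSet_Fl (lam := lam) k1) (measurableSet_Fl (lam := lam) m1)
    (measurableSet_Fl (lam := lam) k2) (measurableSet_Fl (lam := lam) m2)
    (measurableSet_Fl (lam := lam) k3) (measurableSet_Fl (lam := lam) m3)
    (Fl_ne_top h0 hlam1 k1 g1.ne_top) (Fl_ne_top h0 hlam1 m1 f1)
    (Fl_ne_top h0 hlam1 k2 g2.ne_top) (Fl_ne_top h0 hlam1 m2 f2)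
    (Fl_ne_top h0 hlam1 k3 g3.ne_top) (Fl_ne_top h0 hlam1 m3 f3)
    (by rw [vr h0 hlam1 m1 f1]; linarith)
    (by rw [vr h0 hlam1 k2 g2.ne_top]; exact (vF f2 g2.ne_top d2).trans hM2)
  have b3 := T1_Fl_anti_finU _ n1 n2 n3 rfl F1 F2 F3 k1 k2 k3 g1 g2 g3 lam mu h0 hlm h1
  have c1 := volReal_Fl_symmDiff_le hmu0 h1 m1 k1 f1 g1.ne_top
  have c2 := volReal_Fl_symmDiff_le hmu0 h1 m2 k2 f2 g2.ne_top
  have c3 := volReal_Fl_symmDiff_le hmu0 h1 m3 k3 f3 g3.ne_top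
  have c1' := volReal_Fl_symmDiff_le h0 hlam1 k1 m1 g1.ne_top f1
  have c2' := volReal_Fl_symmDiff_le h0 hlam1 k2 m2 g2.ne_top f2
  have c3' := volReal_Fl_symmDiff_le h0 hlam1 k3 m3 g3.ne_top f3
  rw [symmDiff_comm F1] at c1'
  rw [symmDiff_comm F2] at c2'
  rw [symmDiff_comm F3] at c3'
  have u1 : M * (volume.real (symmDiff (Fl mu E1) (Fl mu F1)) +
      volume.real (symmDiff (Fl mu E2) (Fl mu F2)) +
      volume.real (symmDiff (Fl mu E3) (Fl mu F3))) ≤ M * (3 * e) :=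
    mul_le_mul_of_nonneg_left (by linarith) hM0.le
  have u2 : M * (volume.real (symmDiff (Fl lam F1) (Fl lam E1)) +
      volume.real (symmDiff (Fl lam F2) (Fl lam E2)) +
      volume.real (symmDiff (Fl lam F3) (Fl lam E3))) ≤ M * (3 * e) :=
    mul_le_mul_of_nonneg_left (by linarith) hM0.le
  linarith

lemma Fl_tendsto {E : Set ℝ} (hm : MeasurableSet E) (hf : volume E ≠ ⊤) {t : ℝ}
    (ht : t ∈ Icc (0:ℝ) 1) :
    Tendsto (fun s => volume.real (symmDiff (Fl (1 - s) E) (Fl (1 - t) E)))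
      (nhdsWithin t (Icc (0:ℝ) 1)) (nhds 0) := by
  rw [Metric.tendsto_nhdsWithin_nhds]
  intro e he
  obtain ⟨δ, hδ, h⟩ := Fl_unif_cont hm hf he
  refine ⟨δ, hδ, fun s hs hd => ?_⟩
  rw [Real.dist_0_eq_abs, abs_of_nonneg measureReal_nonneg]
  refine h _ _ (by linarith [hs.2]) (by linarith [hs.1]) (by linarith [ht.2]) (by linarith [ht.1]) ?_
  rw [show 1 - s - (1 - t) = -(s - t) by ring, abs_neg]
  exact hd

lemma T1_Fl_continuousOn {E1 E2 E3 : Set ℝ} (m1 : MeasurableSet E1) (m2 : MeasurableSet E2)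
    (m3 : MeasurableSet E3) (f1 : volume E1 ≠ ⊤) (f2 : volume E2 ≠ ⊤) (f3 : volume E3 ≠ ⊤) :
    ContinuousOn (fun t => T1 (Fl (1 - t) E1) (Fl (1 - t) E2) (Fl (1 - t) E3)) (Icc 0 1) := by
  intro t ht
  set M := max (volume.real E1) (volume.real E2)
  have bd : ∀ s ∈ Icc (0:ℝ) 1, ∀ r ∈ Icc (0:ℝ) 1,
      T1 (Fl (1 - s) E1) (Fl (1 - s) E2) (Fl (1 - s) E3) ≤
      T1 (Fl (1 - r) E1) (Fl (1 - r) E2) (Fl (1 - r) E3) + M *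
        (volume.real (symmDiff (Fl (1 - s) E1) (Fl (1 - r) E1)) +
         volume.real (symmDiff (Fl (1 - s) E2) (Fl (1 - r) E2)) +
         volume.real (symmDiff (Fl (1 - s) E3) (Fl (1 - r) E3))) := by
    intro s hs r hr
    have s0 : 0 ≤ 1 - s := by linarith [hs.2]
    have s1 : 1 - s ≤ 1 := by linarith [hs.1]
    have r0 : 0 ≤ 1 - r := by linarith [hr.2]
    have r1 : 1 - r ≤ 1 := by linarith [hr.1]
    exact T1_le (measurableSet_Fl m1) (measurableSet_Fl m1) (measurableSet_Fl m2)
      (measurableSet_Fl m2) (measurableSet_Fl m3) (measurableSet_Fl m3)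
      (Fl_ne_top s0 s1 m1 f1) (Fl_ne_top r0 r1 m1 f1) (Fl_ne_top s0 s1 m2 f2)
      (Fl_ne_top r0 r1 m2 f2) (Fl_ne_top s0 s1 m3 f3) (Fl_ne_top r0 r1 m3 f3)
      (by rw [Measure.real, volume_Fl r0 r1 m1 f1]; exact le_max_left _ _)
      (by rw [Measure.real, volume_Fl s0 s1 m2 f2]; exact le_max_right _ _)
  have lim := (((Fl_tendsto m1 f1 ht).add (Fl_tendsto m2 f2 ht)).add
    (Fl_tendsto m3 f3 ht)).const_mul M
  simp only [add_zero, mul_zero] at lim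
  rw [ContinuousWithinAt, tendsto_iff_dist_tendsto_zero]
  refine squeeze_zero' (Eventually.of_forall fun _ => dist_nonneg) ?_ lim
  filter_upwards [self_mem_nhdsWithin] with s hs
  rw [Real.dist_eq, abs_sub_le_iff]
  have q1 := bd s hs t ht
  have q2 := bd t ht s hs
  rw [symmDiff_comm (Fl (1 - t) E1), symmDiff_comm (Fl (1 - t) E2),
    symmDiff_comm (Fl (1 - t) E3)] at q2
  constructor <;> linarith

/-- Existence of the one-dimensional symmetrizing flow satisfying properties (1)–(7),
which in addition instantly smooths: for every `t > 0`, the set `E(t)` coincides, up to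
a Lebesgue null set, with a countable union of intervals. -/
theorem exists_symmetrization_flow_smoothing :
    ∃ flow : ℝ → Set ℝ → Set ℝ,
      -- single-set properties (1), (2), (3), and measurability
      (∀ E : Set ℝ, MeasurableSet E → volume E ≠ ⊤ →
        (∀ t ∈ Set.Icc (0:ℝ) 1, MeasurableSet (flow t E)) ∧
        volume (symmDiff (flow 0 E) E) = 0 ∧
        volume (symmDiff (flow 1 E) (intervalStar E)) = 0 ∧
        (∀ t ∈ Set.Icc (0:ℝ) 1, volume (flow t E) = volume E) ∧
        (∀ t ∈ Set.Icc (0:ℝ) 1,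
          Filter.Tendsto (fun s => (volume (symmDiff (flow s E) (flow t E))).toReal)
            (nhdsWithin t (Set.Icc (0:ℝ) 1)) (nhds 0))) ∧
      -- (4) inclusion monotonicity, up to null sets
      (∀ E F : Set ℝ, MeasurableSet E → MeasurableSet F → volume E ≠ ⊤ → volume F ≠ ⊤ →
        volume (E \ F) = 0 → ∀ s ∈ Set.Icc (0:ℝ) 1, volume (flow s E \ flow s F) = 0) ∧
      -- (5) contractivity
      (∀ E F : Set ℝ, MeasurableSet E → MeasurableSet F → volume E ≠ ⊤ → volume F ≠ ⊤ →
        ∀ t ∈ Set.Icc (0:ℝ) 1,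
          volume (symmDiff (flow t E) (flow t F)) ≤ volume (symmDiff E F)) ∧
      -- (6) independence of past history: E(t) = (E(s))(τ) with 1 − τ = (1−t)/(1−s)
      (∀ E : Set ℝ, MeasurableSet E → volume E ≠ ⊤ →
        ∀ s t : ℝ, 0 ≤ s → s ≤ t → t ≤ 1 →
          volume (symmDiff (flow t E) (flow (1 - (1 - t) / (1 - s)) (flow s E))) = 0) ∧
      -- (7) functional monotonicity and continuity
      (∀ E₁ E₂ E₃ : Set ℝ,
        MeasurableSet E₁ → MeasurableSet E₂ → MeasurableSet E₃ →
        volume E₁ ≠ ⊤ → volume E₂ ≠ ⊤ → volume E₃ ≠ ⊤ →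
        ContinuousOn (fun t => T1 (flow t E₁) (flow t E₂) (flow t E₃)) (Set.Icc 0 1) ∧
        MonotoneOn (fun t => T1 (flow t E₁) (flow t E₂) (flow t E₃)) (Set.Icc 0 1)) ∧
      -- smoothing: for every `t > 0`, `E(t)` is a countable union of intervals
      (∀ E : Set ℝ, MeasurableSet E → volume E ≠ ⊤ →
        ∀ t : ℝ, 0 < t → t ≤ 1 →
          ∃ I : ℕ → Set ℝ, (∀ n, ∃ a b : ℝ, I n = Set.Icc a b) ∧
            volume (symmDiff (flow t E) (⋃ n, I n)) = 0) := by
  have lam01 : ∀ {t : ℝ}, t ∈ Icc (0:ℝ) 1 → 0 ≤ 1 - t ∧ 1 - t ≤ 1 := fun h =>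
    ⟨by linarith [h.2], by linarith [h.1]⟩
  refine ⟨fun t E => Fl (1 - t) E, ?_, ?_, ?_, ?_, ?_, ?_⟩
  · intro E hm hf
    refine ⟨fun t _ => measurableSet_Fl hm, ?_, ?_, ?_, ?_⟩
    · simp only [sub_zero, Fl_one, symmDiff_self]
      exact measure_empty
    · simp only [sub_self]
      exact Fl_zero hm hf
    · exact fun t ht => volume_Fl (lam01 ht).1 (lam01 ht).2 hm hf
    · exact fun t ht => Fl_tendsto hm hf ht
  · exact fun E F _ _ _ _ h s _ => Fl_mono h
  · exact fun E F hE hF hEf hFf t ht =>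
      volume_Fl_symmDiff_le (lam01 ht).1 (lam01 ht).2 hE hF hEf hFf
  · intro E hm hf s t hs hst ht
    have a : 0 ≤ 1 - s := by linarith
    have b : 1 - s ≤ 1 := by linarith
    have c : 0 ≤ 1 - t := by linarith
    have h := Fl_semigroup hm hf a b (div_nonneg c a) (div_le_one_of_le₀ (by linarith) a)
    -- when `s = 1` also `t = 1`, and the junk value `0 / 0 = 0` still gives `0 * 0 = 1 - t`
    have e : (1 - t) / (1 - s) * (1 - s) = 1 - t :=
      div_mul_cancel_of_imp fun h0 => by linarith
    rw [e] at h
    simpa only [sub_sub_cancel] using h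
  · intro E₁ E₂ E₃ m1 m2 m3 f1 f2 f3
    refine ⟨T1_Fl_continuousOn m1 m2 m3 f1 f2 f3, fun s hs t ht hst => ?_⟩
    exact T1_Fl_anti m1 m2 m3 f1 f2 f3 (lam01 ht).1 (by linarith) (lam01 hs).2
  · intro E _ _ t ht _
    have hlt : 1 - t < 1 := by linarith
    obtain ⟨I, hI, hU⟩ := isOpen_eq_iUnion_Icc (isOpen_slide (1 - t) E)
    refine ⟨I, hI, ?_⟩
    simp only [hU, Fl_of_lt hlt, symmDiff_self]
    exact measure_empty
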